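/- arXiv:2005.10931 — 9 statements merged into one kernel-verified Lean document; each statement's English description precedes it below -/
import Mathlib

section
/- Let F_q be the finite field with q elements and F_{q^h} an extension of F_q. Let α ∈ F_{q^h} \ F_q be an element with [F_q(α):F_q] = s. Let t1, t2 be positive integers with t1 + t2 ≤ s + 1, and let f1, f2, g1, g2 ∈ F_q[X] with f1, g1 monic, deg(f1) ≤ t1−1, deg(g1) ≤ t1−1, deg(f2) ≤ t2−1, deg(g2) ≤ t2−1, gcd(f1,f2) = gcd(g1,g2) = 1. If f1(α)·g2(α) = f2(α)·g1(α) in F_{q^h}, then f1 = g1 and f2 = g2. -/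
/-! The polynomial `f1 * g2 - f2 * g1` vanishes at `α` and has degree at most
`t1 + t2 - 2 < s`, the degree of the minimal polynomial of `α`, so it is zero. From
`f1 * g2 = f2 * g1` and coprimality, the monic polynomials `f1` and `g1` divide each other,
hence coincide; cancelling `f1` gives `f2 = g2`. -/

open Polynomial

/-- Lemma 2.2 of the paper. Let `F = F_q` be a finite field and
`E = F_{q^h}` an extension. Let `α ∈ E \ F` with `[F(α):F] = s`. If `t1, t2 ≥ 1` with
`t1 + t2 ≤ s + 1`, and `f1, f2, g1, g2 ∈ F[X]` with `f1, g1` monic, suitable degree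
bounds, `gcd(f1,f2) = gcd(g1,g2) = 1`, and `f1(α)g2(α) = f2(α)g1(α)`,
then `f1 = g1` and `f2 = g2`. -/
theorem stmt0 (q h s t1 t2 : ℕ) (F E : Type*) [Field F] [Fintype F] [Field E] [Fintype E]
    [Algebra F E] (hq : Fintype.card F = q) (hE : Fintype.card E = q ^ h)
    (α : E) (hα : α ∉ Set.range (algebraMap F E)) (hs : (minpoly F α).natDegree = s)
    (ht1 : 1 ≤ t1) (ht2 : 1 ≤ t2) (hts : t1 + t2 ≤ s + 1)
    (f1 f2 g1 g2 : F[X])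
    (hf1m : f1.Monic) (hg1m : g1.Monic)
    (hdf1 : f1.degree ≤ (t1 - 1 : ℕ)) (hdg1 : g1.degree ≤ (t1 - 1 : ℕ))
    (hdf2 : f2.degree ≤ (t2 - 1 : ℕ)) (hdg2 : g2.degree ≤ (t2 - 1 : ℕ))
    (hcopf : IsCoprime f1 f2) (hcopg : IsCoprime g1 g2)
    (heq : aeval α f1 * aeval α g2 = aeval α f2 * aeval α g1) :
    f1 = g1 ∧ f2 = g2 := by
  have hpoly : f1 * g2 = f2 * g1 := by
    rw [← sub_eq_zero]
    by_contra hne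
    have hmin := natDegree_le_natDegree
      (minpoly.degree_le_of_ne_zero F α hne (by simp [heq]))
    have hd1 : (f1 * g2).natDegree ≤ (t1 - 1) + (t2 - 1) :=
      natDegree_mul_le_of_le (natDegree_le_of_degree_le hdf1) (natDegree_le_of_degree_le hdg2)
    have hd2 : (f2 * g1).natDegree ≤ (t2 - 1) + (t1 - 1) :=
      natDegree_mul_le_of_le (natDegree_le_of_degree_le hdf2) (natDegree_le_of_degree_le hdg1)
    have hd := natDegree_sub_le (f1 * g2) (f2 * g1)
    omega
  have hfg : f1 ∣ g1 := hcopf.dvd_of_dvd_mul_left ⟨g2, hpoly.symm⟩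
  have hgf : g1 ∣ f1 := hcopg.dvd_of_dvd_mul_right ⟨f2, by rw [hpoly, mul_comm]⟩
  have h1 : f1 = g1 := eq_of_monic_of_associated hf1m hg1m (associated_of_dvd_dvd hfg hgf)
  subst h1
  refine ⟨rfl, mul_left_cancel₀ hf1m.ne_zero ?_⟩
  rw [hpoly, mul_comm]
end

section
/- Let F_q be the finite field with q elements and let 1 ≤ t1 ≤ t2 be integers. The set S = {(f1, f2) : f1, f2 ∈ F_q[X], deg(f1) ≤ t1−1, deg(f2) ≤ t2−1, and (f1, f2) is in reduced form} has exactly q^{t1+t2−1} + 1 elements. -/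
/-!
Every nonzero pair of polynomials is uniquely `(d * u, d * v)` with `d` monic and `u, v` coprime
(`d` is the monic gcd). A monic `d ≠ 1` is uniquely `X * e + C c` with `e` monic and `c` a
constant, and replacing `d` by `e` lowers the degree of both `d * u` and `d * v` by one. Hence the
non-coprime nonzero pairs with degrees `< m + 1`, `< n + 1` correspond to `F` times the nonzero
pairs with degrees `< m`, `< n`, and the number of coprime pairs is
`(q ^ (m + n + 2) - 1) - q * (q ^ (m + n) - 1) = (q - 1) * (q ^ (m + n + 1) + 1)`.
The unit group of `F` acts freely by scaling on the coprime pairs, and the pairs in reduced form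
represent the orbits, so dividing by `q - 1` gives the count.
-/

open Polynomial

/-- A tuple of polynomials is in *reduced form* if the first nonzero polynomial in the
tuple is monic and the gcd of all of them is 1 (i.e. every common divisor is a unit);
in particular not all polynomials are zero. -/
def ReducedForm {F : Type*} [Field F] {n : ℕ} (f : Fin n → F[X]) : Prop :=
  (∃ i, f i ≠ 0) ∧
  (∀ i, f i ≠ 0 → (∀ j, j < i → f j = 0) → (f i).Monic) ∧
  (∀ d : F[X], (∀ i, d ∣ f i) → IsUnit d)

namespace ReducedPairs

variable {F : Type*} [Field F]

/-- Nonzero pairs of polynomials with degrees `< m` and `< n`. -/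
def nonzeroPairs (F : Type*) [Field F] (m n : ℕ) : Set (F[X] × F[X]) :=
  {p | p.1.degree < m ∧ p.2.degree < n ∧ p ≠ 0}

/-- Coprime pairs of polynomials with degrees `< m` and `< n`. -/
def coprimePairs (F : Type*) [Field F] (m n : ℕ) : Set (F[X] × F[X]) :=
  {p | p.1.degree < m ∧ p.2.degree < n ∧ IsCoprime p.1 p.2}

/-- Triples `(d, u, v)` with `d` monic, `u` and `v` coprime, `deg (d * u) < m` and
`deg (d * v) < n`: a pair split into its monic gcd `d` and its coprime part. -/
def gcdTriples (F : Type*) [Field F] (m n : ℕ) : Set (F[X] × F[X] × F[X]) :=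
  {t | t.1.Monic ∧ IsCoprime t.2.1 t.2.2 ∧ (t.1 * t.2.1).degree < m ∧ (t.1 * t.2.2).degree < n}

/-- Coprime pairs with degrees `< m` and `< n` whose first nonzero entry is monic. -/
def monicCoprimePairs (F : Type*) [Field F] (m n : ℕ) : Set (F[X] × F[X]) :=
  {p | p.1.degree < m ∧ p.2.degree < n ∧ (p.1.Monic ∨ p.1 = 0 ∧ p.2.Monic) ∧ IsCoprime p.1 p.2}

lemma reducedForm_pair_iff (f g : F[X]) :
    ReducedForm ![f, g] ↔ (f.Monic ∨ f = 0 ∧ g.Monic) ∧ IsCoprime f g := by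
  rw [← isRelPrime_iff_isCoprime]
  simp only [ReducedForm, Fin.exists_fin_two, Fin.forall_fin_two, IsRelPrime]
  simp only [Matrix.cons_val_zero, Matrix.cons_val_one, ne_eq, Fin.not_lt_zero, lt_self_iff_false,
    Fin.zero_lt_one, false_imp_iff, true_imp_iff, and_true, and_imp]
  constructor
  · rintro ⟨h1, ⟨h2, h3⟩, h4⟩
    refine ⟨?_, fun d => h4 d⟩
    by_cases hf : f = 0
    · exact Or.inr ⟨hf, h3 (by tauto) hf⟩
    · exact Or.inl (h2 hf)
  · rintro ⟨h | ⟨h, h'⟩, h4⟩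
    · exact ⟨Or.inl h.ne_zero, ⟨fun _ => h, fun _ h0 => absurd h0 h.ne_zero⟩, fun d => @h4 d⟩
    · exact ⟨Or.inr h'.ne_zero, ⟨fun h0 => absurd h h0, fun _ _ => h'⟩, fun d => @h4 d⟩

section Fintype

variable [Fintype F]

lemma ncard_degree_lt (n : ℕ) :
    {p : F[X] | p.degree < n}.ncard = Fintype.card F ^ n ∧ {p : F[X] | p.degree < n}.Finite := by
  have h : {p : F[X] | p.degree < n} = (degreeLT F n : Set F[X]) := by
    ext p; simp [mem_degreeLT]
  rw [h]
  have e := (degreeLTEquiv F n).toEquiv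
  constructor
  · rw [← Nat.card_coe_set_eq]
    refine (Nat.card_congr e).trans ?_
    simp
  · exact Finite.of_equiv _ e.symm

lemma ncard_nonzeroPairs (m n : ℕ) :
    (nonzeroPairs F m n).ncard + 1 = Fintype.card F ^ (m + n) ∧ (nonzeroPairs F m n).Finite := by
  have h : nonzeroPairs F m n =
      ({p : F[X] | p.degree < m} ×ˢ {p : F[X] | p.degree < n}) \ {0} := by
    ext p; simp [nonzeroPairs, and_assoc]
  have hfin := (ncard_degree_lt (F := F) m).2.prod (ncard_degree_lt (F := F) n).2
  rw [h]
  refine ⟨?_, hfin.sdiff⟩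
  rw [Set.ncard_sdiff_singleton_add_one (by simp) hfin, Set.ncard_prod,
    (ncard_degree_lt m).1, (ncard_degree_lt n).1, pow_add]

end Fintype

/-- One half of the uniqueness of the gcd splitting: applied in both directions, it shows that the
monic factors of two splittings of the same pair are associated. -/
lemma dvd_of_mul_eq {d u v d' u' v' : F[X]} (h : IsCoprime u v)
    (h1 : d * u = d' * u') (h2 : d * v = d' * v') : d' ∣ d := by
  obtain ⟨a, b, hab⟩ := h
  refine ⟨a * u' + b * v', ?_⟩
  linear_combination (-d) * hab + a * h1 + b * h2

lemma injOn_gcdTriples (m n : ℕ) :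
    Set.InjOn (fun t : F[X] × F[X] × F[X] => (t.1 * t.2.1, t.1 * t.2.2)) (gcdTriples F m n) := by
  rintro ⟨d, u, v⟩ ⟨hd, hc, -⟩ ⟨d', u', v'⟩ ⟨hd', hc', -⟩ h
  simp only [Prod.mk.injEq] at h hd hc hd' hc' ⊢
  obtain ⟨h1, h2⟩ := h
  have hdd : d = d' := eq_of_monic_of_associated hd hd'
    (associated_of_dvd_dvd (dvd_of_mul_eq hc' h1.symm h2.symm) (dvd_of_mul_eq hc h1 h2))
  subst hdd
  exact ⟨rfl, mul_left_cancel₀ hd.ne_zero h1, mul_left_cancel₀ hd.ne_zero h2⟩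

lemma image_gcdTriples (m n : ℕ) :
    (fun t : F[X] × F[X] × F[X] => (t.1 * t.2.1, t.1 * t.2.2)) '' gcdTriples F m n =
      nonzeroPairs F m n := by
  classical
  ext ⟨f, g⟩
  constructor
  · rintro ⟨⟨d, u, v⟩, ⟨hd, hc, h1, h2⟩, h⟩
    simp only [Prod.mk.injEq] at h hd hc h1 h2
    obtain ⟨rfl, rfl⟩ := h
    refine ⟨h1, h2, fun h0 => ?_⟩
    simp only [Prod.mk_eq_zero, mul_eq_zero, hd.ne_zero, false_or] at h0
    obtain ⟨rfl, rfl⟩ := h0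
    exact not_isCoprime_zero_zero hc
  · rintro ⟨h1, h2, h0⟩
    have hne : ¬ (f = 0 ∧ g = 0) := by simpa using h0
    have hg : EuclideanDomain.gcd f g ≠ 0 := by rwa [Ne, EuclideanDomain.gcd_eq_zero_iff]
    set d := normalize (EuclideanDomain.gcd f g) with hd
    have hmon : d.Monic := monic_normalize hg
    obtain ⟨u, hu⟩ : d ∣ f := normalize_dvd_iff.2 (EuclideanDomain.gcd_dvd_left f g)
    obtain ⟨v, hv⟩ : d ∣ g := normalize_dvd_iff.2 (EuclideanDomain.gcd_dvd_right f g)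
    refine ⟨(d, u, v), ⟨hmon, ?_, by simpa [← hu] using h1, by simpa [← hv] using h2⟩,
      by simp [← hu, ← hv]⟩
    obtain ⟨w, hw⟩ : EuclideanDomain.gcd f g ∣ d := dvd_normalize_iff.2 dvd_rfl
    have hb := EuclideanDomain.gcd_eq_gcd_ab f g
    refine ⟨EuclideanDomain.gcdA f g * w, EuclideanDomain.gcdB f g * w,
      mul_left_cancel₀ hmon.ne_zero ?_⟩
    linear_combination (-EuclideanDomain.gcdA f g * w) * hu
      + (-EuclideanDomain.gcdB f g * w) * hv - hw - w * hb

lemma ncard_gcdTriples (m n : ℕ) : (gcdTriples F m n).ncard = (nonzeroPairs F m n).ncard := by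
  rw [← image_gcdTriples, (injOn_gcdTriples m n).ncard_image]

lemma degree_C_lt_degree_X_mul {d : F[X]} (hd : d.Monic) (c : F) :
    (C c).degree < (X * d).degree := by
  refine degree_C_le.trans_lt ?_
  rw [degree_mul, degree_X, degree_eq_natDegree hd.ne_zero]
  norm_cast
  omega

lemma degree_X_mul_add_C {d : F[X]} (hd : d.Monic) (c : F) :
    (X * d + C c).degree = (X * d).degree :=
  degree_add_eq_left_of_degree_lt (degree_C_lt_degree_X_mul hd c)

lemma monic_X_mul_add_C {d : F[X]} (hd : d.Monic) (c : F) : (X * d + C c).Monic :=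
  (monic_X.mul hd).add_of_left (degree_C_lt_degree_X_mul hd c)

lemma degree_step {d : F[X]} (hd : d.Monic) (c : F) (u : F[X]) (m : ℕ) :
    ((X * d + C c) * u).degree < ((m + 1 : ℕ) : WithBot ℕ) ↔ (d * u).degree < m := by
  rw [degree_mul, degree_X_mul_add_C hd, ← degree_mul, mul_assoc]
  by_cases h : d * u = 0
  · simp [h]
  · rw [degree_mul, degree_X, degree_eq_natDegree h]
    norm_cast
    omega

/-- The gcd `d` is either `1` or of the form `X * e + C c` with `e` monic. -/
lemma gcdTriples_succ (m n : ℕ) :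
    gcdTriples F (m + 1) (n + 1) =
      (fun p => ((1 : F[X]), p)) '' coprimePairs F (m + 1) (n + 1) ∪
      (fun s : F × F[X] × F[X] × F[X] => (X * s.2.1 + C s.1, s.2.2)) ''
        (Set.univ ×ˢ gcdTriples F m n) := by
  ext ⟨d, u, v⟩
  constructor
  · rintro ⟨hd, hc, h1, h2⟩
    simp only at hd hc h1 h2
    by_cases hd1 : d = 1
    · subst hd1
      exact Or.inl ⟨(u, v), ⟨by simpa using h1, by simpa using h2, hc⟩, rfl⟩
    · right
      have hdeg : d.natDegree ≠ 0 := fun h => hd1 (hd.natDegree_eq_zero.1 h)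
      have hmon : d.divX.Monic := by
        rw [Monic, leadingCoeff, natDegree_divX_eq_natDegree_tsub_one, coeff_divX,
          Nat.sub_add_cancel (Nat.one_le_iff_ne_zero.2 hdeg)]
        exact hd
      have hdec : X * d.divX + C (d.coeff 0) = d := X_mul_divX_add d
      refine ⟨(d.coeff 0, d.divX, u, v), ⟨trivial, hmon, hc, ?_, ?_⟩, ?_⟩
      · rw [← hdec, degree_step hmon] at h1; exact h1
      · rw [← hdec, degree_step hmon] at h2; exact h2
      · simp [hdec]
  · rintro (⟨⟨u', v'⟩, ⟨h1, h2, hc⟩, h⟩ | ⟨⟨c, e, u', v'⟩, ⟨-, he, hc, h1, h2⟩, h⟩)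
    · simp only [Prod.mk.injEq] at h h1 h2 hc
      obtain ⟨rfl, rfl, rfl⟩ := h
      exact ⟨monic_one, hc, by simpa using h1, by simpa using h2⟩
    · simp only [Prod.mk.injEq] at h he hc h1 h2
      obtain ⟨rfl, rfl, rfl⟩ := h
      exact ⟨monic_X_mul_add_C he c, hc, (degree_step he c _ m).2 h1, (degree_step he c _ n).2 h2⟩

lemma divX_X_mul (p : F[X]) : (X * p).divX = p := by
  ext k
  rw [coeff_divX, coeff_X_mul]

lemma ncard_gcdTriples_succ [Fintype F] (m n : ℕ) :
    (gcdTriples F (m + 1) (n + 1)).ncard =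
      (coprimePairs F (m + 1) (n + 1)).ncard + Fintype.card F * (gcdTriples F m n).ncard := by
  have hfin : (gcdTriples F (m + 1) (n + 1)).Finite := by
    refine Set.Finite.of_finite_image ?_ (injOn_gcdTriples _ _)
    rw [image_gcdTriples]
    exact (ncard_nonzeroPairs _ _).2
  have hs := gcdTriples_succ (F := F) m n
  rw [hs] at hfin ⊢
  rw [Set.ncard_union_eq ?_ (hfin.subset Set.subset_union_left)
    (hfin.subset Set.subset_union_right)]
  · rw [Set.ncard_image_of_injective _ (Prod.mk_right_injective _), Set.ncard_image_of_injective,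
      Set.ncard_prod, Set.ncard_univ, Nat.card_eq_fintype_card]
    rintro ⟨c, d, p⟩ ⟨c', d', p'⟩ h
    simp only [Prod.mk.injEq] at h ⊢
    obtain ⟨h, hp⟩ := h
    have h1 := congrArg divX h
    have h2 := congrArg (coeff · 0) h
    simp only [divX_add, divX_X_mul, divX_C, add_zero] at h1
    simp only [coeff_add, coeff_X_mul_zero, coeff_C_zero, zero_add] at h2
    exact ⟨h2, h1, hp⟩
  · rw [Set.disjoint_left]
    rintro _ ⟨p, -, rfl⟩ ⟨⟨c, d, p'⟩, ⟨-, hd, -⟩, h⟩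
    simp only [Prod.mk.injEq] at h hd
    have h1 := congrArg divX h.1
    simp only [divX_add, divX_X_mul, divX_C, add_zero, divX_one] at h1
    exact hd.ne_zero h1

lemma isCoprime_C_mul {a : F} (ha : a ≠ 0) {f g : F[X]} :
    IsCoprime (C a * f) (C a * g) ↔ IsCoprime f g := by
  have hu : IsUnit (C a : F[X]) := isUnit_C.2 ha.isUnit
  rw [isCoprime_mul_unit_left_left hu, isCoprime_mul_unit_left_right hu]

/-- Scaling by units identifies the coprime pairs with `Fˣ` times the normalized ones. -/
lemma ncard_coprimePairs [Fintype F] (m n : ℕ) :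
    (coprimePairs F m n).ncard = (Fintype.card F - 1) * (monicCoprimePairs F m n).ncard := by
  classical
  have himg : (fun s : Fˣ × F[X] × F[X] => (C (s.1 : F) * s.2.1, C (s.1 : F) * s.2.2)) ''
      (Set.univ ×ˢ monicCoprimePairs F m n) = coprimePairs F m n := by
    ext ⟨f, g⟩
    constructor
    · rintro ⟨⟨a, u, v⟩, ⟨-, h1, h2, -, hc⟩, h⟩
      simp only [Prod.mk.injEq] at h h1 h2 hc
      obtain ⟨rfl, rfl⟩ := h
      refine ⟨?_, ?_, (isCoprime_C_mul a.ne_zero).2 hc⟩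
      · simpa [degree_mul, degree_C a.ne_zero] using h1
      · simpa [degree_mul, degree_C a.ne_zero] using h2
    · rintro ⟨h1, h2, hc⟩
      simp only at h1 h2 hc
      obtain ⟨a, ha, hm⟩ : ∃ a : F, a ≠ 0 ∧ ((C a⁻¹ * f).Monic ∨
          C a⁻¹ * f = 0 ∧ (C a⁻¹ * g).Monic) := by
        by_cases hf : f = 0
        · have hg : g ≠ 0 := by
            rintro rfl; subst hf; exact not_isCoprime_zero_zero hc
          refine ⟨g.leadingCoeff, leadingCoeff_ne_zero.2 hg, Or.inr ⟨by simp [hf], ?_⟩⟩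
          rw [mul_comm]; exact monic_mul_leadingCoeff_inv hg
        · refine ⟨f.leadingCoeff, leadingCoeff_ne_zero.2 hf, Or.inl ?_⟩
          rw [mul_comm]; exact monic_mul_leadingCoeff_inv hf
      refine ⟨(Units.mk0 a ha, C a⁻¹ * f, C a⁻¹ * g), ⟨trivial, ?_, ?_, hm,
        (isCoprime_C_mul (inv_ne_zero ha)).2 hc⟩, ?_⟩
      · simpa [degree_mul, degree_C (inv_ne_zero ha)] using h1
      · simpa [degree_mul, degree_C (inv_ne_zero ha)] using h2
      · simp [← mul_assoc, ← C_mul, ha]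
  rw [← himg, Set.InjOn.ncard_image, Set.ncard_prod, Set.ncard_univ, Nat.card_eq_fintype_card,
    Fintype.card_units]
  rintro ⟨a, f, g⟩ ⟨-, -, -, hm, -⟩ ⟨b, f', g'⟩ ⟨-, -, -, hm', -⟩ h
  simp only [Prod.mk.injEq] at h hm hm' ⊢
  obtain ⟨h1, h2⟩ := h
  have hzero : f = 0 ↔ f' = 0 := by
    have := congrArg (· = 0) h1
    simpa using this
  -- The leading coefficient of the first nonzero entry recovers the scalar.
  have hab : a = b := by
    rcases hm with hm | ⟨h0, hm⟩ <;> rcases hm' with hm' | ⟨h0', hm'⟩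
    · have := congrArg leadingCoeff h1
      simp only [leadingCoeff_mul, leadingCoeff_C, hm.leadingCoeff, hm'.leadingCoeff,
        mul_one] at this
      exact Units.ext this
    · exact absurd (hzero.2 h0') hm.ne_zero
    · exact absurd (hzero.1 h0) hm'.ne_zero
    · have := congrArg leadingCoeff h2
      simp only [leadingCoeff_mul, leadingCoeff_C, hm.leadingCoeff, hm'.leadingCoeff,
        mul_one] at this
      exact Units.ext this
  subst hab
  have hC : (C (a : F) : F[X]) ≠ 0 := C_ne_zero.2 a.ne_zero
  exact ⟨rfl, mul_left_cancel₀ hC h1, mul_left_cancel₀ hC h2⟩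

lemma ncard_monicCoprimePairs [Fintype F] (m n : ℕ) :
    (monicCoprimePairs F (m + 1) (n + 1)).ncard = Fintype.card F ^ (m + n + 1) + 1 := by
  have h1 := (ncard_nonzeroPairs (F := F) (m + 1) (n + 1)).1
  have h2 := (ncard_nonzeroPairs (F := F) m n).1
  have h3 := ncard_gcdTriples_succ (F := F) m n
  rw [ncard_gcdTriples, ncard_gcdTriples, ncard_coprimePairs] at h3
  have hq : 1 < Fintype.card F := Fintype.one_lt_card
  obtain ⟨r, hr⟩ : ∃ r, Fintype.card F = r + 1 := ⟨Fintype.card F - 1, by omega⟩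
  rw [hr] at h1 h2 h3 ⊢
  rw [Nat.add_sub_cancel] at h3
  have hr0 : 0 < r := by omega
  have e1 : m + 1 + (n + 1) = m + n + 2 := by ring
  rw [e1] at h1
  apply Nat.eq_of_mul_eq_mul_left hr0
  zify at *
  rw [h3] at h1
  linear_combination h1 - (r + 1 : ℤ) * h2

end ReducedPairs

/-- Lemma 2.4 of the paper. The set of pairs `(f1, f2)` of polynomials
over `F_q` in reduced form with `deg f1 ≤ t1 - 1` and `deg f2 ≤ t2 - 1`, where
`1 ≤ t1 ≤ t2`, has exactly `q^(t1+t2-1) + 1` elements. -/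
theorem stmt1 (q t1 t2 : ℕ) (F : Type*) [Field F] [Fintype F] (hq : Fintype.card F = q)
    (ht1 : 1 ≤ t1) (ht12 : t1 ≤ t2) :
    {p : F[X] × F[X] | p.1.degree ≤ (t1 - 1 : ℕ) ∧ p.2.degree ≤ (t2 - 1 : ℕ) ∧
        ReducedForm ![p.1, p.2]}.ncard = q ^ (t1 + t2 - 1) + 1 := by
  obtain ⟨m, rfl⟩ : ∃ m, t1 = m + 1 := ⟨t1 - 1, by omega⟩
  obtain ⟨n, rfl⟩ : ∃ n, t2 = n + 1 := ⟨t2 - 1, by omega⟩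
  have hdeg (p : F[X]) (k : ℕ) : p.degree ≤ k ↔ p.degree < (k + 1 : ℕ) := by
    rw [← natDegree_le_iff_degree_le, degree_lt_iff_coeff_zero, natDegree_le_iff_coeff_eq_zero]
    rfl
  have e : m + 1 + (n + 1) - 1 = m + n + 1 := by omega
  rw [← hq, e, ← ReducedPairs.ncard_monicCoprimePairs]
  congr 1
  ext p
  simp only [Set.mem_ofPred_eq, ReducedPairs.monicCoprimePairs, Nat.add_sub_cancel, hdeg,
    ReducedPairs.reducedForm_pair_iff]
end

section
/- Let F_q be the finite field with q elements, let l ≥ 1, and let 1 ≤ t1 ≤ t2 ≤ … ≤ t_{l+1} be integers with k = t1 + t2 + … + t_{l+1}. The set S = {(f1, f2, …, f_{l+1}) : f_i ∈ F_q[X], deg(f_i) ≤ t_i − 1 for all i, and (f1, …, f_{l+1}) is in reduced form} has exactly q^{k−1} + q^{k−2} + … + q^{k−l} + 1 elements. -/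
/-!
Write `V t` for the tuples with `deg f i < t i`, so `#V t = q ^ ∑ t i`. Every nonzero tuple is
uniquely a product `g • f` with `g` monic and `f` coprime (`g` is the monic gcd; uniqueness comes
from `Ideal.span (range (g • f)) = Ideal.span {g}`). Hence the set `P t` of such pairs `(g, f)` with
`g • f ∈ V t` has `q ^ ∑ t i - 1` elements.

Pairs with `g = 1` are the coprime tuples of `V t`. A monic `g ≠ 1` is uniquely `X * h + c` with `h`
monic and `c` a constant, and `deg g = deg h + 1`, so the pairs with `g ≠ 1` correspond to
`F × P (t - 1)`. Therefore, with `n = l + 1` entries, the number of coprime tuples is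
`(q ^ k - 1) - q * (q ^ (k - n) - 1)`. Scaling by the units of `F` makes the reduced tuples a
`1 / (q - 1)` fraction of the coprime ones; dividing gives the geometric sum.
-/

open Polynomial

namespace ReducedCount

variable {F : Type*} [Field F] {n : ℕ}

/-- The tuple has no common divisor other than units. -/
def Cop (f : Fin n → F[X]) : Prop := ∀ d : F[X], (∀ i, d ∣ f i) → IsUnit d

/-- Tuples with `deg (f i) < t i`; a bound `t i = 0` forces `f i = 0`. -/
def V (F : Type*) [Field F] (t : Fin n → ℕ) : Set (Fin n → F[X]) :=
  {f | ∀ i, (f i).degree < t i}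

/-- Pairs `(g, f)` with `g` monic, `f` coprime and `g • f` within the degree bounds `t`. -/
def P (F : Type*) [Field F] (t : Fin n → ℕ) : Set (F[X] × (Fin n → F[X])) :=
  {x | x.1.Monic ∧ Cop x.2 ∧ x.1 • x.2 ∈ V F t}

lemma Cop.exists_ne {f : Fin n → F[X]} (h : Cop f) : ∃ i, f i ≠ 0 := by
  by_contra! H
  exact not_isUnit_X (h X fun i => by simp [H i])

lemma Cop.span {f : Fin n → F[X]} (h : Cop f) : Ideal.span (Set.range f) = ⊤ := by
  obtain ⟨d, hd⟩ := (IsPrincipalIdealRing.principal (Ideal.span (Set.range f))).principal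
  rw [Ideal.submodule_span_eq] at hd
  rw [hd, Ideal.span_singleton_eq_top]
  refine h d fun i => ?_
  rw [← Ideal.mem_span_singleton, ← hd]
  exact Ideal.subset_span ⟨i, rfl⟩

lemma Cop.span_smul {f : Fin n → F[X]} (h : Cop f) (g : F[X]) :
    Ideal.span (Set.range (g • f)) = Ideal.span {g} := by
  apply le_antisymm
  · rw [Ideal.span_le]
    rintro _ ⟨i, rfl⟩
    exact Ideal.mem_span_singleton.2 ⟨f i, rfl⟩
  · rw [Ideal.span_singleton_le_iff_mem]
    have h1 : (1 : F[X]) ∈ Ideal.span (Set.range f) := by rw [h.span]; trivial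
    obtain ⟨c, hc⟩ := Ideal.mem_span_range_iff_exists_fun.1 h1
    refine Ideal.mem_span_range_iff_exists_fun.2 ⟨c, ?_⟩
    calc ∑ i, c i * (g • f) i = g * ∑ i, c i * f i := by
          rw [Finset.mul_sum]
          exact Finset.sum_congr rfl fun i _ => by simp only [Pi.smul_apply, smul_eq_mul]; ring
      _ = g := by rw [hc, mul_one]

lemma factor_unique {g g' : F[X]} {f f' : Fin n → F[X]} (hg : g.Monic) (hg' : g'.Monic)
    (hf : Cop f) (hf' : Cop f') (h : g • f = g' • f') : g = g' ∧ f = f' := by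
  have h1 : Ideal.span {g} = Ideal.span {g'} := by rw [← hf.span_smul, ← hf'.span_smul, h]
  have h2 : g = g' :=
    eq_of_monic_of_associated hg hg' (Ideal.span_singleton_eq_span_singleton.1 h1)
  subst h2
  refine ⟨rfl, funext fun i => ?_⟩
  exact mul_left_cancel₀ hg.ne_zero (congrFun h i)

lemma factor_exists (p : Fin n → F[X]) (hp : p ≠ 0) :
    ∃ (g : F[X]) (f : Fin n → F[X]), g.Monic ∧ Cop f ∧ g • f = p := by
  obtain ⟨d, hd⟩ := (IsPrincipalIdealRing.principal (Ideal.span (Set.range p))).principal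
  rw [Ideal.submodule_span_eq] at hd
  have hdvd : ∀ i, d ∣ p i := fun i => by
    rw [← Ideal.mem_span_singleton, ← hd]
    exact Ideal.subset_span ⟨i, rfl⟩
  have hd0 : d ≠ 0 := by
    rintro rfl
    exact hp (funext fun i => zero_dvd_iff.1 (hdvd i))
  have hlc : d.leadingCoeff ≠ 0 := leadingCoeff_ne_zero.2 hd0
  choose f hf using hdvd
  refine ⟨d * C d.leadingCoeff⁻¹, fun i => C d.leadingCoeff * f i,
    monic_mul_leadingCoeff_inv hd0, ?_, ?_⟩
  · intro e he
    -- `d * e` divides every `p i`, hence divides the generator `d`.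
    have : d * e ∣ d := by
      have hle : Ideal.span (Set.range p) ≤ Ideal.span {d * e} := by
        rw [Ideal.span_le]
        rintro _ ⟨i, rfl⟩
        refine Ideal.mem_span_singleton.2 ?_
        rw [hf i]
        refine mul_dvd_mul_left d ?_
        have hu : IsUnit (C d.leadingCoeff) := isUnit_C.2 hlc.isUnit
        exact hu.dvd_mul_left.1 (he i)
      rw [hd, Ideal.span_singleton_le_span_singleton] at hle
      exact hle
    exact isUnit_of_dvd_one ((mul_dvd_mul_iff_left hd0).1 (by simpa using this))
  · funext i
    have : C d.leadingCoeff⁻¹ * C d.leadingCoeff = (1 : F[X]) := by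
      rw [← C_mul, inv_mul_cancel₀ hlc, C_1]
    simp only [Pi.smul_apply, smul_eq_mul]
    rw [hf i]
    linear_combination d * f i * this

lemma ncard_V [Fintype F] (t : Fin n → ℕ) :
    (V F t).Finite ∧ (V F t).ncard = Fintype.card F ^ ∑ i, t i := by
  let e : V F t ≃ ∀ i, (Fin (t i) → F) :=
    { toFun := fun f i => degreeLTEquiv F (t i) ⟨f.1 i, mem_degreeLT.2 (f.2 i)⟩
      invFun := fun v => ⟨fun i => ((degreeLTEquiv F (t i)).symm (v i)).1,
        fun i => mem_degreeLT.1 ((degreeLTEquiv F (t i)).symm (v i)).2⟩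
      left_inv := fun f => by
        apply Subtype.ext
        funext i
        simp
      right_inv := fun v => by
        funext i
        exact (degreeLTEquiv F (t i)).apply_symm_apply (v i) }
  refine ⟨Finite.of_equiv _ e.symm, ?_⟩
  rw [← Nat.card_coe_set_eq, Nat.card_congr e, Nat.card_pi]
  simp [Finset.prod_pow_eq_pow_sum]

lemma bijOn_P (t : Fin n → ℕ) :
    Set.BijOn (fun x : F[X] × (Fin n → F[X]) => x.1 • x.2) (P F t) (V F t \ {0}) := by
  refine ⟨?_, ?_, ?_⟩
  · rintro ⟨g, f⟩ ⟨hg, hf, h⟩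
    refine ⟨h, fun h0 => ?_⟩
    obtain ⟨i, hi⟩ := hf.exists_ne
    exact mul_ne_zero hg.ne_zero hi (congrFun h0 i)
  · rintro ⟨g, f⟩ ⟨hg, hf, -⟩ ⟨g', f'⟩ ⟨hg', hf', -⟩ h
    obtain ⟨rfl, rfl⟩ := factor_unique hg hg' hf hf' h
    rfl
  · rintro p ⟨hp, hp0⟩
    obtain ⟨g, f, hg, hf, rfl⟩ := factor_exists p hp0
    exact ⟨(g, f), ⟨hg, hf, hp⟩, rfl⟩

lemma ncard_P [Fintype F] (t : Fin n → ℕ) :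
    (P F t).Finite ∧ (P F t).ncard + 1 = Fintype.card F ^ ∑ i, t i := by
  have hb := bijOn_P (F := F) t
  obtain ⟨hfin, hc⟩ := ncard_V (F := F) t
  refine ⟨hb.finite_iff_finite.2 hfin.sdiff, ?_⟩
  rw [← hc, ← hb.injOn.ncard_image, hb.image_eq]
  refine Set.ncard_sdiff_singleton_add_one ?_ hfin
  intro i
  simp

lemma monic_X_mul_add {h : F[X]} (hh : h.Monic) (c : F) :
    (X * h + C c).Monic ∧ (X * h + C c).degree = h.degree + 1 := by
  have hd : (X * h).degree = h.degree + 1 := by rw [degree_mul, degree_X, add_comm]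
  have hlt : (C c).degree < (X * h).degree := by
    rw [hd, degree_eq_natDegree hh.ne_zero]
    exact degree_C_le.trans_lt (by exact_mod_cast Nat.succ_pos _)
  exact ⟨(monic_X.mul hh).add_of_left hlt, by rw [degree_add_eq_left_of_degree_lt hlt, hd]⟩

lemma mem_V_iff {t : Fin n → ℕ} (ht : ∀ i, 1 ≤ t i) {h : F[X]} (hh : h.Monic) (c : F)
    (f : Fin n → F[X]) :
    (X * h + C c) • f ∈ V F t ↔ h • f ∈ V F (fun i => t i - 1) := by
  obtain ⟨hm, hd⟩ := monic_X_mul_add hh c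
  refine forall_congr' fun i => ?_
  simp only [Pi.smul_apply, smul_eq_mul, degree_mul, hd]
  by_cases hf : f i = 0
  · simp [hf]
  · rw [degree_eq_natDegree hf, degree_eq_natDegree hh.ne_zero]
    have := ht i
    norm_cast
    omega

/-- A monic polynomial other than `1` is `X * h + c` with `h` monic, so the pairs with nontrivial
gcd correspond to `F × P (t - 1)`. -/
lemma bijOn_step {t : Fin n → ℕ} (ht : ∀ i, 1 ≤ t i) :
    Set.BijOn (fun y : F × (F[X] × (Fin n → F[X])) => (X * y.2.1 + C y.1, y.2.2))
      (Set.univ ×ˢ P F (fun i => t i - 1)) {x ∈ P F t | x.1 ≠ 1} := by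
  refine ⟨?_, ?_, ?_⟩
  · rintro ⟨c, h, f⟩ ⟨-, hh, hf, hv⟩
    obtain ⟨hm, hd⟩ := monic_X_mul_add hh c
    refine ⟨⟨hm, hf, (mem_V_iff ht hh c f).2 hv⟩, fun h1 => ?_⟩
    replace h1 : X * h + C c = 1 := h1
    rw [h1, degree_one, degree_eq_natDegree (Monic.ne_zero hh)] at hd
    norm_cast at hd
  · rintro ⟨c, h, f⟩ - ⟨c', h', f'⟩ - he
    simp only [Prod.mk.injEq] at he
    obtain ⟨h1, rfl⟩ := he
    have hc : c = c' := by simpa using congrArg (fun p => coeff p 0) h1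
    subst hc
    have : h = h' := mul_left_cancel₀ X_ne_zero (add_right_cancel h1)
    rw [this]
  · rintro ⟨g, f⟩ ⟨⟨hg, hf, hv⟩, hne⟩
    have hdec : X * divX g + C (g.coeff 0) = g := X_mul_divX_add g
    have hm : (divX g).Monic := by
      have hpos : g.natDegree ≠ 0 := fun h0 => hne (hg.natDegree_eq_zero.1 h0)
      rw [Monic, leadingCoeff, natDegree_divX_eq_natDegree_tsub_one, coeff_divX,
        Nat.sub_add_cancel (Nat.one_le_iff_ne_zero.2 hpos)]
      exact hg
    refine ⟨(g.coeff 0, divX g, f), ⟨trivial, hm, hf, ?_⟩, ?_⟩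
    · rw [← mem_V_iff ht hm (g.coeff 0), hdec]
      exact hv
    · simp only [hdec]

lemma ncard_cop [Fintype F] {t : Fin n → ℕ} (ht : ∀ i, 1 ≤ t i) :
    {f ∈ V F t | Cop f}.ncard + Fintype.card F * (P F (fun i => t i - 1)).ncard
      = (P F t).ncard := by
  have hb := bijOn_step (F := F) ht
  have hfin := (ncard_P (F := F) t).1
  have h1 : {x ∈ P F t | x.1 ≠ 1}.ncard
      = Fintype.card F * (P F (fun i => t i - 1)).ncard := by
    rw [← hb.image_eq, hb.injOn.ncard_image, Set.ncard_prod, Set.ncard_univ,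
      Nat.card_eq_fintype_card]
  have h2 : {x ∈ P F t | ¬ x.1 ≠ 1} = (fun f => ((1 : F[X]), f)) '' {f ∈ V F t | Cop f} := by
    ext ⟨g, f⟩
    constructor
    · rintro ⟨⟨-, hf, hv⟩, h1⟩
      obtain rfl : g = 1 := not_not.1 h1
      exact ⟨f, ⟨by simpa using hv, hf⟩, rfl⟩
    · rintro ⟨f', ⟨hv, hf⟩, he⟩
      simp only [Prod.mk.injEq] at he
      obtain ⟨rfl, rfl⟩ := he
      exact ⟨⟨monic_one, hf, by simpa using hv⟩, by simp⟩
  have h3 : {x ∈ P F t | ¬ x.1 ≠ 1}.ncard = {f ∈ V F t | Cop f}.ncard := by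
    rw [h2, Set.ncard_image_of_injective]
    intro a b h
    simpa using h
  rw [← h1, ← h3, add_comm, ← Set.ncard_union_eq _ (hfin.subset (Set.sep_subset _ _))
    (hfin.subset (Set.sep_subset _ _))]
  · congr 1
    ext x
    simp only [Set.mem_union, Set.mem_ofPred_eq]
    tauto
  · rw [Set.disjoint_left]
    rintro x ⟨-, hx⟩ ⟨-, hx'⟩
    exact hx' hx

lemma exists_first {f : Fin n → F[X]} (h : ∃ i, f i ≠ 0) :
    ∃ i, f i ≠ 0 ∧ ∀ j, j < i → f j = 0 := by
  obtain ⟨i, hi, hmin⟩ := WellFounded.has_min (wellFounded_lt (α := Fin n)) {i | f i ≠ 0} h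
  exact ⟨i, hi, fun j hj => by_contra fun h0 => hmin j h0 hj⟩

lemma cop_smul {f : Fin n → F[X]} (a : Fˣ) (hf : Cop f) : Cop (a • f) := by
  intro d hd
  refine hf d fun i => ?_
  have h := (hd i).mul_left (C ((a⁻¹ : Fˣ) : F))
  have e : C ((a⁻¹ : Fˣ) : F) * (a • f) i = f i := by
    rw [← smul_eq_C_mul]
    exact inv_smul_smul a (f i)
  rwa [e] at h

lemma mem_V_smul {t : Fin n → ℕ} {f : Fin n → F[X]} (a : Fˣ) (hf : f ∈ V F t) :
    a • f ∈ V F t := fun i => (degree_smul_le (a : F) (f i)).trans_lt (hf i)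

/-- Every coprime tuple is a unique unit multiple of a reduced one. -/
lemma bijOn_scale (t : Fin n → ℕ) :
    Set.BijOn (fun y : Fˣ × (Fin n → F[X]) => y.1 • y.2)
      (Set.univ ×ˢ {f ∈ V F t | ReducedForm f}) {f ∈ V F t | Cop f} := by
  refine ⟨?_, ?_, ?_⟩
  · rintro ⟨a, f⟩ ⟨-, hv, -, -, hf⟩
    exact ⟨mem_V_smul a hv, cop_smul a hf⟩
  · rintro ⟨a, f⟩ ⟨-, -, hne, hmon, -⟩ ⟨b, f'⟩ ⟨-, -, -, hmon', -⟩ he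
    replace he : a • f = b • f' := he
    have hzero : ∀ j, f j = 0 ↔ f' j = 0 := fun j => by
      rw [← smul_eq_zero_iff_eq a, ← smul_eq_zero_iff_eq (α := Fˣ) b (x := f' j)]
      rw [show a • f j = b • f' j from congrFun he j]
    obtain ⟨i, hi, hlt⟩ := exists_first hne
    have h1 := hmon i hi hlt
    have h2 := hmon' i (mt (hzero i).2 hi) fun j hj => (hzero j).1 (hlt j hj)
    have h3 : C (a : F) * f i = C (b : F) * f' i := by
      rw [← smul_eq_C_mul, ← smul_eq_C_mul]
      exact congrFun he i
    have h4 : a = b := Units.ext (by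
      simpa [h1.leadingCoeff, h2.leadingCoeff] using congrArg leadingCoeff h3)
    subst h4
    have h5 : f = f' := smul_left_cancel a he
    rw [h5]
  · rintro f ⟨hv, hf⟩
    obtain ⟨i, hi, hlt⟩ := exists_first hf.exists_ne
    let a : Fˣ := Units.mk0 (f i).leadingCoeff (leadingCoeff_ne_zero.2 hi)
    have hc := cop_smul a⁻¹ hf
    refine ⟨(a, a⁻¹ • f), ⟨trivial, mem_V_smul _ hv, hc.exists_ne, ?_, hc⟩, smul_inv_smul a f⟩
    intro j hj hjlt
    have hij : j = i := by
      rcases lt_trichotomy j i with h | h | h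
      · exact absurd (by simp [hlt j h]) hj
      · exact h
      · exact absurd ((smul_eq_zero_iff_eq a⁻¹).1 (hjlt i h)) hi
    subst hij
    change (((a⁻¹ : Fˣ) : F) • f j).Monic
    rw [Monic, smul_eq_C_mul, leadingCoeff_mul, leadingCoeff_C]
    exact a.inv_mul

lemma geom_aux (Q : ℤ) (l k : ℕ) (h : l ≤ k) :
    (Q - 1) * ∑ i ∈ Finset.range l, Q ^ (k - 1 - i) = Q ^ k - Q ^ (k - l) := by
  induction l with
  | zero => simp
  | succ m ih =>
    rw [Finset.sum_range_succ, mul_add, ih (by omega)]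
    have e : k - m = (k - 1 - m) + 1 := by omega
    rw [e, show k - (m + 1) = k - 1 - m by omega, pow_succ]
    ring

end ReducedCount

open ReducedCount

/-- Lemma 2.12 of the paper. Let `l ≥ 1` and `1 ≤ t1 ≤ … ≤ t_{l+1}` with
`k = t1 + … + t_{l+1}`. The set of `(l+1)`-tuples of polynomials over `F_q` in reduced form
with `deg f_i ≤ t_i - 1` has exactly `q^(k-1) + q^(k-2) + … + q^(k-l) + 1` elements. -/
theorem stmt2 (q l k : ℕ) (F : Type*) [Field F] [Fintype F] (hq : Fintype.card F = q)
    (hl : 1 ≤ l) (t : Fin (l + 1) → ℕ) (ht : ∀ i, 1 ≤ t i) (hmono : Monotone t)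
    (hk : k = ∑ i, t i) :
    {f : Fin (l + 1) → F[X] |
        (∀ i, (f i).degree ≤ (t i - 1 : ℕ)) ∧ ReducedForm f}.ncard
      = (∑ i ∈ Finset.range l, q ^ (k - 1 - i)) + 1 := by
  have hset : {f : Fin (l + 1) → F[X] | (∀ i, (f i).degree ≤ (t i - 1 : ℕ)) ∧ ReducedForm f}
      = {f ∈ V F t | ReducedForm f} := by
    ext f
    refine and_congr_left fun _ => forall_congr' fun i => ?_
    have := ht i
    by_cases hf : f i = 0
    · simp [hf]
    · rw [degree_eq_natDegree hf]
      norm_cast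
      omega
  rw [hset]
  have hb := bijOn_scale (F := F) t
  have h1 : {f ∈ V F t | Cop f}.ncard = (q - 1) * {f ∈ V F t | ReducedForm f}.ncard := by
    rw [← hb.image_eq, hb.injOn.ncard_image, Set.ncard_prod, Set.ncard_univ,
      Nat.card_units, Nat.card_eq_fintype_card, hq]
  have h2 := ncard_cop (F := F) ht
  have h3 := (ncard_P (F := F) t).2
  have h4 := (ncard_P (F := F) (fun i => t i - 1)).2
  have hsum : (∑ i, (t i - 1)) + (l + 1) = k := by
    have : ∑ i, t i = ∑ i, ((t i - 1) + 1) :=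
      Finset.sum_congr rfl fun i _ => (Nat.sub_add_cancel (ht i)).symm
    rw [hk, this, Finset.sum_add_distrib]
    simp
  rw [← hk] at h3
  rw [hq] at h2 h3 h4
  rw [h1] at h2
  have hq1 : 1 < q := hq ▸ Fintype.one_lt_card
  have hgeom := geom_aux (q : ℤ) l k (by omega)
  have hexp : k - l = (∑ i, (t i - 1)) + 1 := by omega
  rw [hexp, pow_succ] at hgeom
  zify [hq1.le] at h2 h3 h4 ⊢
  refine mul_left_cancel₀ (sub_ne_zero.2 (by exact_mod_cast hq1.ne') : (q : ℤ) - 1 ≠ 0) ?_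
  linear_combination h2 + h3 - hgeom - (q : ℤ) * h4
end

section
/- Let F_q be the finite field with q elements, F_{q^h} an extension, and α ∈ F_{q^h} \ F_q with [F_q(α):F_q] = s. Let t1, t2 ≥ 1, k = t1 + t2, and assume k − 1 ≤ s. In the vector space (F_{q^h})^k with standard basis e_1, …, e_k, let Π be the F_{q^h}-subspace spanned by the vectors {e_j − α·e_{j+1} : 1 ≤ j ≤ t1−1} ∪ {e_j − α·e_{j+1} : t1+1 ≤ j ≤ k−1}. Then: (i) Π contains no nonzero vector all of whose coordinates lie in F_q; and (ii) Π intersects the F_{q^h}-span of e_{t1} and e_k only in the zero vector. (Consequently, projecting the canonical subgeometry PG(k−1,q) of PG(k−1,q^h) from the (k−3)-dimensional subspace corresponding to Π onto the line corresponding to ⟨e_{t1}, e_k⟩ yields an F_q-linear set of rank k in PG(1,q^h).) -/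
open Polynomial

/-!
The generators of `Π` identify `e_j` with `α • e_{j+1}` inside each of the two blocks of
coordinates `[0, t1)` and `[t1, t1 + t2)`. Hence `Π` is killed by the two functionals
`v ↦ ∑ α ^ (d - i) * v i`, where `i` runs over a block and `d` is the last index of that block
(`blockForm_eq_zero`).

If the coordinates of `v` lie in `F`, each of these relations is a polynomial relation for `α`
over `F` of degree less than the block length. Since `t1, t2 ≤ k - 1 ≤ s`, this is below the degree
of the minimal polynomial, so all coefficients vanish (`eq_zero_of_blockForm`). On the span of
`e_{t1}` and `e_k`, the two functionals read off the two coefficients, which therefore vanish too.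
-/

/-- The functional `v ↦ ∑ α ^ (a + t - 1 - i) * v i`, the sum running over the block of
coordinates `a ≤ i < a + t`. -/
def blockForm {E : Type*} [Field E] {k : ℕ} (α : E) (a t : ℕ) : (Fin k → E) →ₗ[E] E :=
  ∑ i : Fin k, (if a ≤ (i : ℕ) ∧ (i : ℕ) < a + t then α ^ (a + t - 1 - (i : ℕ)) else 0) •
    LinearMap.proj i

lemma blockForm_apply {E : Type*} [Field E] {k : ℕ} (α : E) (a t : ℕ) (v : Fin k → E) :
    blockForm α a t v = ∑ i : Fin k,
      (if a ≤ (i : ℕ) ∧ (i : ℕ) < a + t then α ^ (a + t - 1 - (i : ℕ)) else 0) * v i := by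
  simp only [blockForm, LinearMap.sum_apply, LinearMap.smul_apply, LinearMap.proj_apply, smul_eq_mul]

lemma blockForm_single {E : Type*} [Field E] {k : ℕ} (α : E) (a t : ℕ) (i : Fin k) :
    blockForm α a t (Pi.single i 1) =
      if a ≤ (i : ℕ) ∧ (i : ℕ) < a + t then α ^ (a + t - 1 - (i : ℕ)) else 0 := by
  simp [blockForm_apply, Pi.single_apply]

/-- Within the block `[a, a + t)` the coefficient of `blockForm` at `j` is `α` times that at
`j + 1`, so a generator `e_j - α • e_{j+1}` which does not straddle an end of the block is
killed. -/
lemma blockForm_generator {E : Type*} [Field E] {k : ℕ} (α : E) (a t j : ℕ) (hj : j + 1 < k)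
    (h1 : j + 1 ≠ a) (h2 : j + 1 ≠ a + t) :
    blockForm α a t ((Pi.single (⟨j, by omega⟩ : Fin k) (1 : E) : Fin k → E)
      - α • (Pi.single (⟨j + 1, hj⟩ : Fin k) (1 : E) : Fin k → E)) = 0 := by
  rw [map_sub, map_smul, blockForm_single, blockForm_single]
  by_cases h : a ≤ j ∧ j < a + t
  · have h' : a ≤ j + 1 ∧ j + 1 < a + t := by omega
    have e : a + t - 1 - j = (a + t - 1 - (j + 1)) + 1 := by omega
    simp only [h, h', and_self, if_true, smul_eq_mul]
    rw [e, pow_succ']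
    simp
  · have h' : ¬ (a ≤ j + 1 ∧ j + 1 < a + t) := by omega
    simp only [h, h', if_false, smul_zero, sub_zero]

lemma blockForm_eq_zero {E : Type*} [Field E] {k : ℕ} (α : E) (a t t1 : ℕ)
    (h1 : ∀ j, j + 1 < k → j + 1 ≠ t1 → j + 1 ≠ a ∧ j + 1 ≠ a + t) {v : Fin k → E}
    (hv : v ∈ Submodule.span E
        {w : Fin k → E | ∃ j : ℕ, ∃ hj : j + 1 < k, j + 1 ≠ t1 ∧
          w = (Pi.single (⟨j, by omega⟩ : Fin k) (1 : E) : Fin k → E)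
              - α • (Pi.single (⟨j + 1, hj⟩ : Fin k) (1 : E) : Fin k → E)}) :
    blockForm α a t v = 0 := by
  have hle : Submodule.span E
        {w : Fin k → E | ∃ j : ℕ, ∃ hj : j + 1 < k, j + 1 ≠ t1 ∧
          w = (Pi.single (⟨j, by omega⟩ : Fin k) (1 : E) : Fin k → E)
              - α • (Pi.single (⟨j + 1, hj⟩ : Fin k) (1 : E) : Fin k → E)}
      ≤ LinearMap.ker (blockForm α a t) := by
    rw [Submodule.span_le]
    rintro w ⟨j, hj, hjt, rfl⟩
    exact blockForm_generator α a t j hj (h1 j hj hjt).1 (h1 j hj hjt).2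
  exact hle hv

/-- A vector over `F` killed by `blockForm` vanishes on the block, because
`1, α, …, α ^ (t - 1)` are linearly independent over `F`. -/
lemma eq_zero_of_blockForm {F E : Type*} [Field F] [Field E] [Algebra F E] {k : ℕ} (α : E)
    (a t : ℕ) (ht : t ≤ (minpoly F α).natDegree) (u : Fin k → F)
    (h : blockForm α a t (fun i => algebraMap F E (u i)) = 0)
    (i : Fin k) (hi : a ≤ (i : ℕ) ∧ (i : ℕ) < a + t) : u i = 0 := by
  set p : F[X] := ∑ j : Fin k, if a ≤ (j : ℕ) ∧ (j : ℕ) < a + t then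
    monomial (a + t - 1 - (j : ℕ)) (u j) else 0 with hp
  have hcoeff : p.coeff (a + t - 1 - (i : ℕ)) = u i := by
    rw [hp, finsetSum_coeff, Finset.sum_eq_single i]
    · simp [hi]
    · intro j _ hji
      have hne : (j : ℕ) ≠ i := fun e => hji (Fin.ext e)
      split_ifs with hj
      · rw [coeff_monomial, if_neg (by omega)]
      · simp
    · simp
  have haeval : aeval α p = 0 := by
    rw [← h, blockForm_apply, hp, map_sum]
    refine Finset.sum_congr rfl fun j _ => ?_
    split_ifs
    · rw [aeval_monomial, mul_comm]
    · simp
  have hdeg : p.degree < (minpoly F α).degree := by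
    have hne : minpoly F α ≠ 0 := by
      intro h0
      rw [h0, natDegree_zero] at ht
      omega
    rw [degree_eq_natDegree hne]
    refine lt_of_lt_of_le ?_ (Nat.cast_le.mpr ht)
    rw [degree_lt_iff_coeff_zero]
    intro m hm
    rw [hp, finsetSum_coeff]
    refine Finset.sum_eq_zero fun j _ => ?_
    split_ifs with hj
    · rw [coeff_monomial, if_neg (by omega)]
    · simp
  have hp0 : p = 0 := eq_zero_of_dvd_of_degree_lt (minpoly.dvd F α haeval) hdeg
  rw [← hcoeff, hp0, coeff_zero]

/-- Lemma 2.1 / Construction 1 of the paper. With `e_j` the standard basis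
of `(F_{q^h})^k` (0-indexed here: the paper's `e_j` is `Pi.single (j-1) 1`), the subspace `Π`
spanned by the vectors `e_j - α • e_{j+1}` for `j ∈ {1,…,t1-1} ∪ {t1+1,…,k-1}` (1-indexed)
contains no nonzero vector with all coordinates in `F_q`, and meets the span of
`e_{t1}` and `e_k` only in `0`. -/
theorem stmt3 (q h s t1 t2 k : ℕ) (F E : Type*) [Field F] [Fintype F] [Field E] [Fintype E]
    [Algebra F E] (hq : Fintype.card F = q) (hE : Fintype.card E = q ^ h)
    (α : E) (hα : α ∉ Set.range (algebraMap F E)) (hs : (minpoly F α).natDegree = s)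
    (ht1 : 1 ≤ t1) (ht2 : 1 ≤ t2) (hk : k = t1 + t2) (hks : k - 1 ≤ s) :
    ∀ v ∈ Submodule.span E
        {w : Fin k → E | ∃ j : ℕ, ∃ hj : j + 1 < k, j + 1 ≠ t1 ∧
          w = (Pi.single (⟨j, by omega⟩ : Fin k) (1 : E) : Fin k → E)
              - α • (Pi.single (⟨j + 1, hj⟩ : Fin k) (1 : E) : Fin k → E)},
      ((∀ i, v i ∈ Set.range (algebraMap F E)) → v = 0) ∧
      (v ∈ Submodule.span E
          ({(Pi.single (⟨t1 - 1, by omega⟩ : Fin k) (1 : E) : Fin k → E),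
            (Pi.single (⟨k - 1, by omega⟩ : Fin k) (1 : E) : Fin k → E)} : Set (Fin k → E)) →
        v = 0) := by
  intro v hv
  have hf1 : blockForm α 0 t1 v = 0 := blockForm_eq_zero α 0 t1 t1 (by omega) hv
  have hf2 : blockForm α t1 t2 v = 0 := blockForm_eq_zero α t1 t2 t1 (by omega) hv
  refine ⟨fun hF => ?_, fun hspan => ?_⟩
  · choose u hu using hF
    obtain rfl : (fun i => algebraMap F E (u i)) = v := funext hu
    funext i
    have hui : u i = 0 := by
      by_cases hi : (i : ℕ) < t1
      · exact eq_zero_of_blockForm α 0 t1 (by omega) u hf1 i (by omega)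
      · exact eq_zero_of_blockForm α t1 t2 (by omega) u hf2 i (by omega)
    simp [hui]
  · obtain ⟨x, y, rfl⟩ := Submodule.mem_span_pair.mp hspan
    rw [map_add, map_smul, map_smul, blockForm_single, blockForm_single] at hf1 hf2
    rw [if_pos (by simp only; omega), if_neg (by simp only; omega)] at hf1
    rw [if_neg (by simp only; omega), if_pos (by simp only; omega)] at hf2
    -- Both remaining coefficients are `α ^ 0`: `t1 - 1` and `k - 1` are the last block indices.
    have e1 : t1 - 1 - (t1 - 1) = 0 := by omega
    have e2 : t1 + t2 - 1 - (k - 1) = 0 := by omega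
    simp only [e1, e2, pow_zero, smul_eq_mul, mul_one, mul_zero, add_zero, zero_add] at hf1 hf2
    simp [hf1, hf2]
end

section
/- Let F_q be the finite field with q elements, F_{q^h} an extension, and α ∈ F_{q^h} \ F_q with [F_q(α):F_q] = s. Let 1 ≤ t1 ≤ t2 with t1 + t2 = k ≤ s + 1. Let L be the set of projective points ⟨(g1(α), g2(α))⟩ of PG(1,q^h) where g1, g2 range over polynomials in F_q[X] with deg(g1) ≤ t1−1, deg(g2) ≤ t2−1, not both zero. Then the map (f1, f2) ↦ ⟨(f1(α), f2(α))⟩ is a bijection from the set S = {(f1,f2) : deg(f1) ≤ t1−1, deg(f2) ≤ t2−1, (f1,f2) in reduced form} onto L. -/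
/-!
A point `⟨(g1(α), g2(α))⟩` is unchanged when a common factor `d` of `g1, g2` is cancelled, because
`d` divides a nonzero polynomial of degree `< s`, so `d(α) ≠ 0`; cancelling the gcd and a leading
coefficient gives a reduced pair (`exists_reducedForm`), hence surjectivity.

For injectivity, if reduced pairs `(f1, f2)`, `(g1, g2)` give the same point, then
`f1 g2 - f2 g1` vanishes at `α`. Its degree is at most `t1 + t2 - 2 ≤ s - 1`, so it is zero as a
polynomial, and the proportional reduced pairs are equal (`reduced_pair_unique`).
-/

open Polynomial

theorem reducedForm_pair_iff {F : Type*} [Field F] (a b : F[X]) :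
    ReducedForm ![a, b] ↔ (a.Monic ∨ (a = 0 ∧ b = 1)) ∧ IsCoprime a b := by
  classical
  constructor
  · rintro ⟨⟨i, hi⟩, hm, hd⟩
    have hc : IsCoprime a b := by
      rw [← EuclideanDomain.gcd_isUnit_iff]
      refine hd _ fun i => ?_
      fin_cases i
      · exact EuclideanDomain.gcd_dvd_left a b
      · exact EuclideanDomain.gcd_dvd_right a b
    refine ⟨?_, hc⟩
    by_cases ha : a = 0
    · subst ha
      have hu : IsUnit b := isCoprime_zero_left.mp hc
      refine Or.inr ⟨rfl, ?_⟩
      have hb : b.Monic := hm 1 hu.ne_zero (fun j hj => by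
        fin_cases j
        · rfl
        · exact absurd hj (lt_irrefl _))
      exact hb.eq_one_of_isUnit hu
    · exact Or.inl (hm 0 ha (fun j hj => absurd hj (Fin.not_lt_zero j)))
  · rintro ⟨h, hc⟩
    refine ⟨?_, ?_, fun d hd => hc.isUnit_of_dvd' (hd 0) (hd 1)⟩
    · rcases h with h | ⟨_, rfl⟩
      · exact ⟨0, h.ne_zero⟩
      · exact ⟨1, one_ne_zero⟩
    · intro i hi hlt
      rcases h with h | ⟨rfl, rfl⟩
      · fin_cases i
        · exact h
        · exact absurd (hlt 0 Fin.zero_lt_one) h.ne_zero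
      · fin_cases i
        · exact absurd rfl hi
        · exact monic_one

/-- Reduced pairs that are proportional over the field of rational functions are equal. -/
theorem reduced_pair_unique {F : Type*} [Field F] {f1 f2 g1 g2 : F[X]}
    (hf : ReducedForm ![f1, f2]) (hg : ReducedForm ![g1, g2]) (h : f1 * g2 = f2 * g1) :
    f1 = g1 ∧ f2 = g2 := by
  rw [reducedForm_pair_iff] at hf hg
  obtain ⟨hf, hfc⟩ := hf
  obtain ⟨hg, hgc⟩ := hg
  have h1 : f1 ∣ g1 := hfc.dvd_of_dvd_mul_left ⟨g2, h.symm⟩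
  have h2 : g1 ∣ f1 := hgc.dvd_of_dvd_mul_right ⟨f2, by rw [h, mul_comm]⟩
  rcases hf with hf | ⟨rfl, rfl⟩ <;> rcases hg with hg | ⟨rfl, rfl⟩
  · have e := eq_of_monic_of_associated hf hg (associated_of_dvd_dvd h1 h2)
    subst e
    exact ⟨rfl, (mul_left_cancel₀ hf.ne_zero (h.trans (mul_comm _ _))).symm⟩
  · exact absurd (zero_dvd_iff.mp h2) hf.ne_zero
  · exact absurd (zero_dvd_iff.mp h1) hg.ne_zero
  · exact ⟨rfl, rfl⟩

theorem exists_reducedForm {F : Type*} [Field F] (g1 g2 : F[X]) (hg : ¬(g1 = 0 ∧ g2 = 0)) :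
    ∃ d a b : F[X], d ≠ 0 ∧ g1 = d * a ∧ g2 = d * b ∧ ReducedForm ![a, b] := by
  classical
  by_cases h1 : g1 = 0
  · refine ⟨g2, 0, 1, fun h2 => hg ⟨h1, h2⟩, by simp [h1], by simp, ?_⟩
    rw [reducedForm_pair_iff]
    exact ⟨Or.inr ⟨rfl, rfl⟩, isCoprime_one_right⟩
  · obtain ⟨a, ha⟩ := EuclideanDomain.gcd_dvd_left g1 g2
    obtain ⟨b, hb⟩ := EuclideanDomain.gcd_dvd_right g1 g2
    have hbez := EuclideanDomain.gcd_eq_gcd_ab g1 g2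
    set d := EuclideanDomain.gcd g1 g2 with hd
    clear_value d
    have hd0 : d ≠ 0 := by rintro rfl; exact h1 (by simpa using ha)
    have ha0 : a ≠ 0 := by rintro rfl; exact h1 (by simpa using ha)
    have hl : a.leadingCoeff ≠ 0 := leadingCoeff_ne_zero.mpr ha0
    have hCC : C a.leadingCoeff * C a.leadingCoeff⁻¹ = (1 : F[X]) := by
      rw [← C_mul, mul_inv_cancel₀ hl, C_1]
    have hu : IsUnit (C a.leadingCoeff⁻¹ : F[X]) := isUnit_C.mpr (inv_ne_zero hl).isUnit
    have hc : IsCoprime a b := by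
      refine ⟨EuclideanDomain.gcdA g1 g2, EuclideanDomain.gcdB g1 g2, mul_left_cancel₀ hd0 ?_⟩
      linear_combination (-EuclideanDomain.gcdA g1 g2) * ha
        - EuclideanDomain.gcdB g1 g2 * hb - hbez
    refine ⟨d * C a.leadingCoeff, a * C a.leadingCoeff⁻¹, b * C a.leadingCoeff⁻¹,
      mul_ne_zero hd0 (C_ne_zero.mpr hl), by linear_combination ha - d * a * hCC,
      by linear_combination hb - d * b * hCC, ?_⟩
    rw [reducedForm_pair_iff]
    exact ⟨Or.inl (monic_mul_leadingCoeff_inv ha0),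
      (isCoprime_mul_unit_right_left hu _ _).mpr
        ((isCoprime_mul_unit_right_right hu _ _).mpr hc)⟩

/-- Lemma 2.3 of the paper. Points of `PG(1,q^h)` are modelled as the
`1`-dimensional `E`-subspaces `span E {v}`, `v ≠ 0`. The map
`(f1, f2) ↦ ⟨(f1(α), f2(α))⟩` is a bijection from the set of reduced-form pairs with
`deg f1 ≤ t1 - 1`, `deg f2 ≤ t2 - 1` onto the linear set `L`. -/
theorem stmt4 (q h s t1 t2 k : ℕ) (F E : Type*) [Field F] [Fintype F] [Field E] [Fintype E]
    [Algebra F E] (hq : Fintype.card F = q) (hE : Fintype.card E = q ^ h)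
    (α : E) (hα : α ∉ Set.range (algebraMap F E)) (hs : (minpoly F α).natDegree = s)
    (ht1 : 1 ≤ t1) (ht12 : t1 ≤ t2) (hk : k = t1 + t2) (hks : k ≤ s + 1) :
    Set.BijOn
      (fun p : F[X] × F[X] =>
        Submodule.span E {![aeval α p.1, aeval α p.2]})
      {p : F[X] × F[X] | p.1.degree ≤ (t1 - 1 : ℕ) ∧ p.2.degree ≤ (t2 - 1 : ℕ) ∧
        ReducedForm ![p.1, p.2]}
      {W : Submodule E (Fin 2 → E) | ∃ g1 g2 : F[X],
        g1.degree ≤ (t1 - 1 : ℕ) ∧ g2.degree ≤ (t2 - 1 : ℕ) ∧ ¬(g1 = 0 ∧ g2 = 0) ∧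
        W = Submodule.span E {![aeval α g1, aeval α g2]}} := by
  have hint : IsIntegral F α := Algebra.IsIntegral.isIntegral α
  have key : ∀ p : F[X], p.degree < (s : ℕ) → aeval α p = 0 → p = 0 := by
    intro p hp h0
    by_contra hne
    have := minpoly.degree_le_of_ne_zero F α hne h0
    rw [degree_eq_natDegree (minpoly.ne_zero hint), hs] at this
    exact absurd hp (not_lt.mpr this)
  have hlt : ∀ n : ℕ, n < s → ∀ p : F[X], p.degree ≤ n → p.degree < (s : ℕ) :=
    fun n hn p hp => lt_of_le_of_lt hp (by exact_mod_cast hn)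
  refine ⟨?_, ?_, ?_⟩
  · rintro ⟨f1, f2⟩ ⟨h1, h2, ⟨i, hi⟩, -⟩
    refine ⟨f1, f2, h1, h2, ?_, rfl⟩
    rintro ⟨rfl, rfl⟩
    fin_cases i <;> exact hi rfl
  · rintro ⟨f1, f2⟩ ⟨hf1, hf2, hf⟩ ⟨g1, g2⟩ ⟨hg1, hg2, hg⟩ heq
    dsimp only at hf1 hf2 hf hg1 hg2 hg heq
    have hmem : ![aeval α f1, aeval α f2] ∈
        Submodule.span E {![aeval α g1, aeval α g2]} := by
      rw [← heq]; exact Submodule.mem_span_singleton_self _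
    obtain ⟨c, hc⟩ := Submodule.mem_span_singleton.mp hmem
    have c0 : c * aeval α g1 = aeval α f1 := congrFun hc 0
    have c1 : c * aeval α g2 = aeval α f2 := congrFun hc 1
    have hbound : ∀ p r : F[X], p.degree ≤ (t1 - 1 : ℕ) → r.degree ≤ (t2 - 1 : ℕ) →
        (p * r).degree ≤ ((t1 - 1 + (t2 - 1) : ℕ) : WithBot ℕ) := by
      intro p r hp hr
      rw [degree_mul, Nat.cast_add]
      exact add_le_add hp hr
    have hz : f1 * g2 - f2 * g1 = 0 := by
      refine key _ (hlt (t1 - 1 + (t2 - 1)) (by omega) _ ?_) ?_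
      · refine (degree_sub_le _ _).trans (max_le (hbound _ _ hf1 hg2) ?_)
        rw [mul_comm]
        exact hbound _ _ hg1 hf2
      · simp only [map_sub, map_mul, ← c0, ← c1]
        ring
    obtain ⟨e1, e2⟩ := reduced_pair_unique hf hg (sub_eq_zero.mp hz)
    rw [e1, e2]
  · rintro W ⟨g1, g2, hg1, hg2, hne, rfl⟩
    obtain ⟨d, a, b, hd, rfl, rfl, hr⟩ := exists_reducedForm g1 g2 hne
    have hle : ∀ p : F[X], p.degree ≤ (d * p).degree := fun p => by
      rw [mul_comm]; exact degree_le_mul_left p hd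
    have hdα : aeval α d ≠ 0 := by
      intro h0
      -- `d` has degree `< s` because it divides a nonzero member of the pair.
      refine hd (key d ?_ h0)
      by_cases ha : a = 0
      · have hb : b ≠ 0 := by rintro rfl; exact hne ⟨by simp [ha], by simp⟩
        exact hlt (t2 - 1) (by omega) d ((degree_le_mul_left d hb).trans hg2)
      · exact hlt (t1 - 1) (by omega) d ((degree_le_mul_left d ha).trans hg1)
    refine ⟨(a, b), ⟨(hle a).trans hg1, (hle b).trans hg2, hr⟩, ?_⟩
    have hv : ![aeval α (d * a), aeval α (d * b)] = aeval α d • ![aeval α a, aeval α b] := by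
      simp
    dsimp only
    rw [hv, Submodule.span_singleton_smul_eq hdα.isUnit]
end

section
/- Let F_q be the finite field with q elements, F_{q^h} an extension, and α ∈ F_{q^h} \ F_q with [F_q(α):F_q] = s. Let t1, t2 ≥ 1 with t1 + t2 = k ≤ s + 1. Let U = {(p(α), r(α)) : p, r ∈ F_q[X], deg(p) ≤ t1−1, deg(r) ≤ t2−1}, an F_q-subspace of (F_{q^h})², and let L = L_U = {⟨u⟩ : u ∈ U \ {0}} ⊆ PG(1,q^h). Then dim_{F_q} U = k (i.e., L is an F_q-linear set of rank k) and L has exactly q^{k−1} + 1 points. -/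
/-!
Evaluation at `α` is injective on polynomials of degree below `s = [F(α) : F]`, and
`t1, t2 ≤ s`, so `dim U = t1 + t2 = k` (`finrank_evalSpace`).

For the number `N` of points, compare `U` with the subspace `U'` obtained by lowering both degree
bounds by one. Two nonzero elements `(p(α), r(α))`, `(p'(α), r'(α))` of `U` span the same point
iff `p r' = p' r` as polynomials, because both products have degree at most `k - 2 < s`
(`mul_eq_of_aeval`). Comparing the coefficients of degree `k - 2` shows that, for every point `P`
of `L_U`, the pair of top coefficients takes values on a line as `(p(α), r(α))` runs through
`U ∩ P`; it does not vanish identically, since a nonzero pair can be multiplied by `X` until a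
degree bound is attained. The kernel is `U' ∩ P`, so `|U ∩ P| = q |U' ∩ P|`
(`card_inf_evalSpace`).

Summing over the points, `|U| - 1 + N = ∑ |U ∩ P| = q ∑ |U' ∩ P| = q (|U'| - 1 + N)`
(`card_add_card`), that is `q^k - 1 + N = q (q^(k-2) - 1 + N)`, whence `N = q^(k-1) + 1`.
-/

open Polynomial

/-- The `F_q`-linear set `L_U = {⟨u⟩ : u ∈ U \ {0}}` determined by an `F`-subspace `U` of
`E^n`; points of `PG(n-1, E)` are modelled as the `1`-dimensional `E`-subspaces
`span E {u}`, `u ≠ 0`. -/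
def linearSet {F E : Type*} [Field F] [Field E] [Algebra F E] {n : ℕ}
    (U : Submodule F (Fin n → E)) : Set (Submodule E (Fin n → E)) :=
  {W | ∃ u ∈ U, u ≠ 0 ∧ W = Submodule.span E {u}}

section LinearSetProof

variable {F E : Type*} [Field F] [Field E] [Algebra F E]

/-- Evaluation at `α` of pairs of polynomials of degrees less than `a` and `b`. -/
noncomputable def evalPair (α : E) (a b : ℕ) :
    (degreeLT F a × degreeLT F b) →ₗ[F] (Fin 2 → E) :=
  LinearMap.pi ![(aeval α).toLinearMap ∘ₗ (degreeLT F a).subtype ∘ₗ LinearMap.fst F _ _,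
    (aeval α).toLinearMap ∘ₗ (degreeLT F b).subtype ∘ₗ LinearMap.snd F _ _]

/-- The `F`-subspace of all `(p(α), r(α))` with `deg p < a` and `deg r < b`. -/
noncomputable def evalSpace (F : Type*) {E : Type*} [Field F] [Field E] [Algebra F E]
    (α : E) (a b : ℕ) : Submodule F (Fin 2 → E) :=
  LinearMap.range (evalPair (F := F) α a b)

lemma evalPair_apply (α : E) (a b : ℕ) (x : degreeLT F a × degreeLT F b) :
    evalPair α a b x = ![aeval α (x.1 : F[X]), aeval α (x.2 : F[X])] := by
  ext i
  fin_cases i <;> simp [evalPair]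

lemma mem_evalSpace {α : E} {a b : ℕ} {v : Fin 2 → E} :
    v ∈ evalSpace F α a b ↔ ∃ p r : F[X], p.degree < a ∧ r.degree < b ∧
      v = ![aeval α p, aeval α r] := by
  constructor
  · rintro ⟨⟨p, r⟩, rfl⟩
    exact ⟨p, r, mem_degreeLT.1 p.2, mem_degreeLT.1 r.2, evalPair_apply ..⟩
  · rintro ⟨p, r, hp, hr, rfl⟩
    exact ⟨(⟨p, mem_degreeLT.2 hp⟩, ⟨r, mem_degreeLT.2 hr⟩), evalPair_apply ..⟩

lemma eq_zero_of_aeval {α : E} {p : F[X]} (hp : p.degree < (minpoly F α).natDegree)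
    (h : aeval α p = 0) : p = 0 := by
  by_contra h0
  have h1 := minpoly.degree_le_of_ne_zero F α h0 h
  have h2 : (minpoly F α).degree ≤ (minpoly F α).natDegree := degree_le_natDegree
  by_cases hm : minpoly F α = 0
  · rw [hm] at hp
    exact h0 (by simpa using hp)
  · rw [degree_eq_natDegree hm] at h1
    exact absurd (lt_of_le_of_lt h1 hp) (lt_irrefl _)

lemma finrank_evalSpace {α : E} {a b : ℕ} (ha : a ≤ (minpoly F α).natDegree)
    (hb : b ≤ (minpoly F α).natDegree) : Module.finrank F (evalSpace F α a b) = a + b := by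
  have hd (n : ℕ) : Module.finrank F (degreeLT F n) = n := by
    rw [(degreeLTEquiv F n).finrank_eq, Module.finrank_fin_fun]
  have hfin (n : ℕ) : Module.Finite F (degreeLT F n) :=
    Module.Finite.equiv (degreeLTEquiv F n).symm
  rw [evalSpace, LinearMap.finrank_range_of_inj, Module.finrank_prod, hd, hd]
  rw [← LinearMap.ker_eq_bot, LinearMap.ker_eq_bot']
  rintro ⟨⟨p, hp⟩, ⟨r, hr⟩⟩ h
  rw [evalPair_apply] at h
  have h0 := congrFun h 0
  have h1 := congrFun h 1
  simp only [Matrix.cons_val_zero, Matrix.cons_val_one, Pi.zero_apply] at h0 h1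
  have hp' := eq_zero_of_aeval ((mem_degreeLT.1 hp).trans_le (by exact_mod_cast ha)) h0
  have hr' := eq_zero_of_aeval ((mem_degreeLT.1 hr).trans_le (by exact_mod_cast hb)) h1
  subst hp' hr'
  rfl

lemma degree_lt_of_coeff_eq_zero {p : F[X]} {a : ℕ} (hp : p.degree < (a + 1 : ℕ))
    (h : p.coeff a = 0) : p.degree < a := by
  rw [degree_lt_iff_coeff_zero] at hp ⊢
  intro m hm
  rcases hm.eq_or_lt with rfl | hm
  · exact h
  · exact hp m hm

lemma natDegree_le_of_degree_lt {p : F[X]} {a : ℕ} (hp : p.degree < (a + 1 : ℕ)) :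
    p.natDegree ≤ a :=
  natDegree_le_iff_coeff_eq_zero.2 fun N hN => (degree_lt_iff_coeff_zero _ _).1 hp N hN

/-- A nonzero pair of polynomials within the degree bounds can be multiplied by a power of `X` so
as to stay within the bounds and attain one of them. -/
lemma exists_shift {p r : F[X]} {a b : ℕ} (hp : p.degree < (a + 1 : ℕ))
    (hr : r.degree < (b + 1 : ℕ)) (h : p ≠ 0 ∨ r ≠ 0) :
    ∃ n : ℕ, (X ^ n * p : F[X]).degree < (a + 1 : ℕ) ∧ (X ^ n * r : F[X]).degree < (b + 1 : ℕ) ∧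
      ((X ^ n * p : F[X]).coeff a ≠ 0 ∨ (X ^ n * r : F[X]).coeff b ≠ 0) := by
  classical
  have hex : ∃ n : ℕ, ¬ ((X ^ n * p : F[X]).degree < a ∧ (X ^ n * r : F[X]).degree < b) := by
    refine ⟨a + b, fun ⟨h1, h2⟩ => ?_⟩
    rcases h with h | h
    · rw [degree_mul, degree_X_pow, degree_eq_natDegree h] at h1
      norm_cast at h1
      omega
    · rw [degree_mul, degree_X_pow, degree_eq_natDegree h] at h2
      norm_cast at h2
      omega
  have key : (X ^ Nat.find hex * p : F[X]).degree < (a + 1 : ℕ) ∧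
      (X ^ Nat.find hex * r : F[X]).degree < (b + 1 : ℕ) := by
    rcases hn : Nat.find hex with _ | m
    · simpa using And.intro hp hr
    · have := Nat.find_min hex (m := m) (by omega)
      rw [not_not] at this
      have hs {f : F[X]} {c : ℕ} (hf : (X ^ m * f : F[X]).degree < c) :
          (X ^ (m + 1) * f : F[X]).degree < (c + 1 : ℕ) := by
        rw [degree_lt_iff_coeff_zero] at hf ⊢
        intro i hi
        obtain ⟨j, rfl⟩ : ∃ j, i = j + 1 := ⟨i - 1, by omega⟩
        rw [pow_succ', mul_assoc, coeff_X_mul]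
        exact hf j (by omega)
      exact ⟨hs this.1, hs this.2⟩
  refine ⟨Nat.find hex, key.1, key.2, ?_⟩
  by_contra hc
  rw [not_or, not_not, not_not] at hc
  exact Nat.find_spec hex ⟨degree_lt_of_coeff_eq_zero key.1 hc.1,
    degree_lt_of_coeff_eq_zero key.2 hc.2⟩

/-- Proportional pairs of polynomials have proportional pairs of top coefficients. -/
lemma exists_coeff_eq {p r p₀ r₀ : F[X]} {a b : ℕ} (hp : p.degree < (a + 1 : ℕ))
    (hr : r.degree < (b + 1 : ℕ)) (hp₀ : p₀.degree < (a + 1 : ℕ)) (hr₀ : r₀.degree < (b + 1 : ℕ))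
    (h : p * r₀ = p₀ * r) (h0 : p₀.coeff a ≠ 0 ∨ r₀.coeff b ≠ 0) :
    ∃ c : F, p.coeff a = c * p₀.coeff a ∧ r.coeff b = c * r₀.coeff b := by
  have hc : p.coeff a * r₀.coeff b = p₀.coeff a * r.coeff b := by
    rw [← coeff_mul_add_eq_of_natDegree_le (natDegree_le_of_degree_lt hp)
        (natDegree_le_of_degree_lt hr₀), h,
      coeff_mul_add_eq_of_natDegree_le (natDegree_le_of_degree_lt hp₀)
        (natDegree_le_of_degree_lt hr)]
  rcases h0 with h0 | h0
  · refine ⟨p.coeff a / p₀.coeff a, ?_, ?_⟩ <;> field_simp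
    linear_combination -hc
  · refine ⟨r.coeff b / r₀.coeff b, ?_, ?_⟩ <;> field_simp
    linear_combination hc

lemma mul_eq_of_aeval {α : E} {p r p₀ r₀ : F[X]} {a b : ℕ}
    (hab : a + b < (minpoly F α).natDegree) (hp : p.degree < (a + 1 : ℕ))
    (hr : r.degree < (b + 1 : ℕ)) (hp₀ : p₀.degree < (a + 1 : ℕ)) (hr₀ : r₀.degree < (b + 1 : ℕ))
    (h : aeval α p * aeval α r₀ = aeval α p₀ * aeval α r) : p * r₀ = p₀ * r := by
  have hd {f g : F[X]} (hf : f.degree < (a + 1 : ℕ)) (hg : g.degree < (b + 1 : ℕ)) :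
      (f * g).degree < (minpoly F α).natDegree := by
    refine lt_of_le_of_lt (degree_le_natDegree) ?_
    norm_cast
    refine lt_of_le_of_lt natDegree_mul_le (lt_of_le_of_lt (add_le_add
      (natDegree_le_of_degree_lt hf) (natDegree_le_of_degree_lt hg)) hab)
  rw [← sub_eq_zero]
  refine eq_zero_of_aeval (lt_of_le_of_lt (degree_sub_le _ _) (max_lt (hd hp hr₀) (hd hp₀ hr))) ?_
  simp [h]

/-- Each point of `L_U` meets `U` in one `F`-dimension more than it meets the space with both
degree bounds lowered by one. -/
lemma card_inf_evalSpace [Finite E] {α : E} {a b : ℕ} (hab : a + b < (minpoly F α).natDegree)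
    {u : Fin 2 → E} (hu : u ∈ evalSpace F α (a + 1) (b + 1)) (hu0 : u ≠ 0) :
    Nat.card ↥(evalSpace F α (a + 1) (b + 1) ⊓ (Submodule.span E {u}).restrictScalars F) =
      Nat.card F *
        Nat.card ↥(evalSpace F α a b ⊓ (Submodule.span E {u}).restrictScalars F) := by
  obtain ⟨p, r, hp, hr, rfl⟩ := mem_evalSpace.1 hu
  have hpr : p ≠ 0 ∨ r ≠ 0 := by
    by_contra! hc
    apply hu0
    ext i
    fin_cases i <;> simp [hc.1, hc.2]
  obtain ⟨n, hp₀, hr₀, h0⟩ := exists_shift hp hr hpr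
  set u : Fin 2 → E := ![aeval α p, aeval α r] with hu_def
  set p₀ := X ^ n * p with hp₀_def
  set r₀ := X ^ n * r with hr₀_def
  set v₀ : Fin 2 → E := ![aeval α p₀, aeval α r₀] with hv₀_def
  have hv₀u : v₀ = α ^ n • u := by
    ext i
    fin_cases i <;> simp [hv₀_def, hu_def, hp₀_def, hr₀_def]
  have hv₀U : v₀ ∈ evalSpace F α (a + 1) (b + 1) := mem_evalSpace.2 ⟨p₀, r₀, hp₀, hr₀, rfl⟩
  have hv₀P : v₀ ∈ (Submodule.span E {u}).restrictScalars F := by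
    rw [Submodule.restrictScalars_mem, hv₀u]
    exact Submodule.smul_mem _ _ (Submodule.mem_span_singleton_self u)
  have hmono : evalSpace F α a b ≤ evalSpace F α (a + 1) (b + 1) := by
    intro v hv
    obtain ⟨p', r', h1, h2, rfl⟩ := mem_evalSpace.1 hv
    exact mem_evalSpace.2 ⟨p', r', h1.trans (by exact_mod_cast Nat.lt_succ_self a),
      h2.trans (by exact_mod_cast Nat.lt_succ_self b), rfl⟩
  have hv₀U' : v₀ ∉ evalSpace F α a b := by
    intro hv
    obtain ⟨p', r', h1, h2, h3⟩ := mem_evalSpace.1 hv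
    have e0 := congrFun h3 0
    have e1 := congrFun h3 1
    simp only [hv₀_def, Matrix.cons_val_zero, Matrix.cons_val_one] at e0 e1
    have hinj {f g : F[X]} {c : ℕ} (hc : c < (minpoly F α).natDegree)
        (hf : f.degree < (c + 1 : ℕ)) (hg : g.degree < c) (hfg : aeval α f = aeval α g) :
        f.coeff c = 0 := by
      have : f - g = 0 := by
        refine eq_zero_of_aeval (α := α) (lt_of_le_of_lt (degree_sub_le _ _)
          (max_lt (hf.trans_le (by exact_mod_cast hc)) (hg.trans (by exact_mod_cast hc)))) ?_
        simp [hfg]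
      rw [sub_eq_zero.1 this]
      exact (degree_lt_iff_coeff_zero _ _).1 hg c le_rfl
    rcases h0 with h0 | h0
    · exact h0 (hinj (by omega) hp₀ h1 e0)
    · exact h0 (hinj (by omega) hr₀ h2 e1)
  rw [← Nat.card_prod]
  symm
  -- `U ∩ P = F v₀ ⊕ (U' ∩ P)`
  refine Nat.card_eq_of_bijective (fun x => ⟨x.1 • v₀ + x.2.1, ?_, ?_⟩) ⟨?_, ?_⟩
  · exact add_mem (Submodule.smul_mem _ _ hv₀U) (hmono x.2.2.1)
  · exact add_mem (Submodule.smul_mem _ _ hv₀P) x.2.2.2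
  · rintro ⟨c, ⟨w, hw⟩⟩ ⟨d, ⟨z, hz⟩⟩ h
    have h' : c • v₀ + w = d • v₀ + z := congrArg Subtype.val h
    have hcd : c = d := by
      by_contra hne
      have hsub : (c - d) • v₀ = z - w := by
        rw [sub_smul, sub_eq_sub_iff_add_eq_add, h', add_comm]
      apply hv₀U'
      rw [← inv_smul_smul₀ (sub_ne_zero.2 hne) v₀, hsub]
      exact Submodule.smul_mem _ _ (sub_mem hz.1 hw.1)
    subst hcd
    have : w = z := add_left_cancel h'
    subst this
    rfl
  · rintro ⟨v, hvU, hvP⟩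
    obtain ⟨f, g, hf, hg, rfl⟩ := mem_evalSpace.1 hvU
    obtain ⟨e, he⟩ := Submodule.mem_span_singleton.1 hvP
    have e0 := congrFun he 0
    have e1 := congrFun he 1
    simp only [hu_def, Pi.smul_apply, smul_eq_mul, Matrix.cons_val_zero,
      Matrix.cons_val_one] at e0 e1
    have hmul : f * r₀ = p₀ * g := by
      refine mul_eq_of_aeval hab hf hg hp₀ hr₀ ?_
      rw [← e0, ← e1, hp₀_def, hr₀_def]
      simp only [map_mul]
      ring
    obtain ⟨c, hc1, hc2⟩ := exists_coeff_eq hf hg hp₀ hr₀ hmul h0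
    refine ⟨(c, ⟨![aeval α f, aeval α g] - c • v₀, ?_, ?_⟩), ?_⟩
    · refine mem_evalSpace.2 ⟨f - c • p₀, g - c • r₀, ?_, ?_, ?_⟩
      · refine degree_lt_of_coeff_eq_zero (lt_of_le_of_lt (degree_sub_le _ _)
          (max_lt hf (lt_of_le_of_lt (degree_smul_le _ _) hp₀))) ?_
        simp [hc1]
      · refine degree_lt_of_coeff_eq_zero (lt_of_le_of_lt (degree_sub_le _ _)
          (max_lt hg (lt_of_le_of_lt (degree_smul_le _ _) hr₀))) ?_
        simp [hc2]
      · ext i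
        fin_cases i <;> simp [hv₀_def]
    · exact sub_mem hvP (Submodule.smul_mem _ _ hv₀P)
    · simp

/-- The points of `S` partition the nonzero vectors of `Y`. -/
lemma card_add_card [Finite E] (S : Finset (Submodule E (Fin 2 → E)))
    (hS : ∀ P ∈ S, ∃ u, u ≠ 0 ∧ P = Submodule.span E {u}) (Y : Submodule F (Fin 2 → E))
    (hY : ∀ u ∈ Y, u ≠ 0 → Submodule.span E {u} ∈ S) :
    Nat.card Y + S.card = (∑ P ∈ S, Nat.card ↥(Y ⊓ P.restrictScalars F)) + 1 := by
  classical
  have := Fintype.ofFinite E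
  have hcard (Z : Submodule F (Fin 2 → E)) :
      Nat.card Z = (Finset.univ.filter fun v => v ∈ Z ∧ v ≠ 0).card + 1 := by
    have h1 : (Finset.univ.filter fun v => v ∈ Z ∧ v ≠ 0) =
        (Finset.univ.filter fun v => v ∈ Z).erase 0 := by
      ext v
      simp [and_comm]
    rw [h1, Finset.card_erase_add_one (by simp), Nat.card_eq_fintype_card]
    exact Fintype.card_subtype _
  have hfib := Finset.card_eq_sum_card_fiberwise
    (s := Finset.univ.filter fun v => v ∈ Y ∧ v ≠ 0) (t := S)
    (f := fun v => Submodule.span E {v}) (by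
      intro v hv
      simp only [Finset.coe_filter, Finset.mem_univ, true_and, Set.mem_ofPred_eq] at hv
      exact hY v hv.1 hv.2)
  have hsum : ∑ P ∈ S, Nat.card ↥(Y ⊓ P.restrictScalars F) =
      (Finset.univ.filter fun v => v ∈ Y ∧ v ≠ 0).card + S.card := by
    rw [hfib, Finset.card_eq_sum_ones, ← Finset.sum_add_distrib]
    refine Finset.sum_congr rfl fun P hP => ?_
    rw [hcard]
    congr 2
    ext v
    simp only [Finset.mem_filter, Finset.mem_univ, true_and, Submodule.mem_inf,
      Submodule.restrictScalars_mem]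
    obtain ⟨u, hu, rfl⟩ := hS P hP
    constructor
    · rintro ⟨⟨hvY, hvP⟩, hv⟩
      refine ⟨⟨hvY, hv⟩, ?_⟩
      obtain ⟨e, rfl⟩ := Submodule.mem_span_singleton.1 hvP
      have he : e ≠ 0 := by
        rintro rfl
        simp at hv
      exact Submodule.span_singleton_smul_eq (IsUnit.mk0 e he) u
    · rintro ⟨⟨hvY, hv⟩, h⟩
      exact ⟨⟨hvY, h ▸ Submodule.mem_span_singleton_self v⟩, hv⟩
  rw [hsum, hcard]
  ring

end LinearSetProof

/-- part of Theorem 2.6 of the paper. With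
`U = {(p(α), r(α)) : deg p ≤ t1 - 1, deg r ≤ t2 - 1}`, `t1 + t2 = k ≤ s + 1`,
`U` has `F_q`-dimension `k` and the linear set `L_U` has exactly `q^(k-1) + 1` points. -/
theorem stmt5 (q h s t1 t2 k : ℕ) (F E : Type*) [Field F] [Fintype F] [Field E] [Fintype E]
    [Algebra F E] (hq : Fintype.card F = q) (hE : Fintype.card E = q ^ h)
    (α : E) (hα : α ∉ Set.range (algebraMap F E)) (hs : (minpoly F α).natDegree = s)
    (ht1 : 1 ≤ t1) (ht2 : 1 ≤ t2) (hk : k = t1 + t2) (hks : k ≤ s + 1)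
    (U : Submodule F (Fin 2 → E))
    (hU : (U : Set (Fin 2 → E)) =
      {v | ∃ p r : F[X], p.degree ≤ (t1 - 1 : ℕ) ∧ r.degree ≤ (t2 - 1 : ℕ) ∧
        v = ![aeval α p, aeval α r]}) :
    Module.finrank F U = k ∧ (linearSet U).ncard = q ^ (k - 1) + 1 := by
  classical
  obtain ⟨a, rfl⟩ : ∃ a, t1 = a + 1 := ⟨t1 - 1, by omega⟩
  obtain ⟨b, rfl⟩ : ∃ b, t2 = b + 1 := ⟨t2 - 1, by omega⟩
  have hlt (f : F[X]) (n : ℕ) : f.degree ≤ n ↔ f.degree < (n + 1 : ℕ) := by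
    rw [degree_le_iff_coeff_zero, degree_lt_iff_coeff_zero]
    exact forall_congr' fun m => by norm_cast
  obtain rfl : U = evalSpace F α (a + 1) (b + 1) := by
    apply SetLike.coe_injective
    rw [hU]
    ext v
    simp only [Set.mem_ofPred_eq, SetLike.mem_coe, mem_evalSpace, Nat.add_sub_cancel, hlt]
  have hdim := finrank_evalSpace (F := F) (α := α) (a := a + 1) (b := b + 1)
    (by omega) (by omega)
  refine ⟨by rw [hdim, hk], ?_⟩
  have hdim' := finrank_evalSpace (F := F) (α := α) (a := a) (b := b) (by omega) (by omega)
  have hfin : (linearSet (evalSpace F α (a + 1) (b + 1))).Finite := Set.toFinite _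
  rw [Set.ncard_eq_toFinset_card _ hfin]
  set S := hfin.toFinset with hS_def
  have hS : ∀ P ∈ S, ∃ u ∈ evalSpace F α (a + 1) (b + 1), u ≠ 0 ∧ P = Submodule.span E {u} := by
    intro P hP
    exact hfin.mem_toFinset.1 hP
  have hS' : ∀ P ∈ S, ∃ u, u ≠ 0 ∧ P = Submodule.span E {u} := fun P hP => by
    obtain ⟨u, -, hu⟩ := hS P hP
    exact ⟨u, hu⟩
  have hmem : ∀ u ∈ evalSpace F α (a + 1) (b + 1), u ≠ 0 → Submodule.span E {u} ∈ S :=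
    fun u hu hu0 => hfin.mem_toFinset.2 ⟨u, hu, hu0, rfl⟩
  have c1 := card_add_card S hS' (evalSpace F α (a + 1) (b + 1)) hmem
  have c2 := card_add_card S hS' (evalSpace F α a b) (fun u hu hu0 => by
    refine hmem u ?_ hu0
    obtain ⟨p', r', h1, h2, rfl⟩ := mem_evalSpace.1 hu
    exact mem_evalSpace.2 ⟨p', r', h1.trans (by exact_mod_cast Nat.lt_succ_self a),
      h2.trans (by exact_mod_cast Nat.lt_succ_self b), rfl⟩)
  have c3 : ∑ P ∈ S, Nat.card ↥(evalSpace F α (a + 1) (b + 1) ⊓ P.restrictScalars F) =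
      q * ∑ P ∈ S, Nat.card ↥(evalSpace F α a b ⊓ P.restrictScalars F) := by
    rw [Finset.mul_sum]
    refine Finset.sum_congr rfl fun P hP => ?_
    obtain ⟨u, hu, hu0, rfl⟩ := hS P hP
    rw [card_inf_evalSpace (by omega) hu hu0, Nat.card_eq_fintype_card (α := F), hq]
  rw [Module.natCard_eq_pow_finrank (K := F), hdim, Nat.card_eq_fintype_card (α := F), hq] at c1
  rw [Module.natCard_eq_pow_finrank (K := F), hdim', Nat.card_eq_fintype_card (α := F), hq] at c2
  have hq1 : 1 < q := hq ▸ Fintype.one_lt_card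
  have hk1 : k - 1 = a + b + 1 := by omega
  rw [hk1]
  rw [c3] at c1
  have hqz : ((q : ℤ) - 1) ≠ 0 := by
    have : (1 : ℤ) < q := by exact_mod_cast hq1
    omega
  zify at c1 c2 ⊢
  apply mul_left_cancel₀ hqz
  linear_combination (q : ℤ) * c2 - c1
end

section
/- Let F_q be the finite field with q elements and F_{q^h} its degree-h extension. Let 2 ≤ k ≤ h and let j be an integer with k/2 ≤ j ≤ k−1. Then there exists an F_q-subspace U of (F_{q^h})² with dim_{F_q} U = k such that the linear set L_U has exactly q^{k−1} + 1 points and the maximum weight (with respect to U) of a point of L_U equals j. -/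
/-!
Let `a` be a primitive element of `E / F`, so that distinct polynomials of degree `< h` take
distinct values at `a`, and let `U(s, t) = {(f(a), g(a)) : deg f < s, deg g < t}`
(`polyPairs a s t`). The subspace sought is `U = U(j, k - j)`.

Since `j + (k - j) ≤ h`, two vectors of `U` are proportional over `E` iff the corresponding pairs
of polynomials are proportional over `F(X)`. Hence each point of `L_U` is represented by a coprime
pair `(f, g)`, and its vectors in `U(s, t)` (for `s ≤ j`, `t ≤ k - j`) are the multiples
`(c f, c g)` with `deg c < min (s - deg f) (t - deg g)`, where the term of a vanishing component is
omitted (`weightOf_polyPairs`). So all weights are at most `max j (k - j) = j`, with equality at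
`⟨(1, 0)⟩`.

For the number of points, put `U' = U(j - 1, k - j - 1)`, of rank `k - 2`. Each point of `L_U` of
weight `w` for `U` has weight `w - 1` for `U'`. Counting nonzero vectors point by point
(`sum_weightOf`) gives `∑ (q ^ w - 1) = q ^ k - 1` and `∑ (q ^ (w - 1) - 1) = q ^ (k - 2) - 1`, the
sums being over `L_U`; subtracting `q` times the second from the first yields
`(q - 1) |L_U| = (q - 1) (q ^ (k - 1) + 1)`.
-/

open Polynomial

/-- The *weight* (with respect to `U`) of a point `W` of `PG(n-1, E)`:
the `F`-dimension of `U ∩ W`. -/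
noncomputable def weightOf {F E : Type*} [Field F] [Field E] [Algebra F E] {n : ℕ}
    (U : Submodule F (Fin n → E)) (W : Submodule E (Fin n → E)) : ℕ :=
  Module.finrank F ↥(U ⊓ Submodule.restrictScalars F W)

/-- The `F`-space `{(f(a), g(a)) : deg f < s, deg g < t}`. -/
noncomputable def polyPairs {F E : Type*} [Field F] [Field E] [Algebra F E] (a : E) (s t : ℕ) :
    Submodule F (Fin 2 → E) where
  carrier := {v | ∃ f ∈ degreeLT F s, ∃ g ∈ degreeLT F t, v = ![aeval a f, aeval a g]}
  zero_mem' := ⟨0, zero_mem _, 0, zero_mem _, by ext i; fin_cases i <;> simp⟩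
  add_mem' := by
    rintro _ _ ⟨f, hf, g, hg, rfl⟩ ⟨f', hf', g', hg', rfl⟩
    exact ⟨f + f', add_mem hf hf', g + g', add_mem hg hg', by simp⟩
  smul_mem' := by
    rintro c _ ⟨f, hf, g, hg, rfl⟩
    exact ⟨c • f, Submodule.smul_mem _ _ hf, c • g, Submodule.smul_mem _ _ hg, by simp⟩

theorem mem_polyPairs {F E : Type*} [Field F] [Field E] [Algebra F E] {a : E} {s t : ℕ}
    {v : Fin 2 → E} : v ∈ polyPairs (F := F) a s t ↔
      ∃ f ∈ degreeLT F s, ∃ g ∈ degreeLT F t, v = ![aeval a f, aeval a g] := Iff.rfl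

theorem polyPairs_mono {F E : Type*} [Field F] [Field E] [Algebra F E] (a : E) {s t s' t' : ℕ}
    (hs : s' ≤ s) (ht : t' ≤ t) : polyPairs (F := F) a s' t' ≤ polyPairs a s t := by
  rintro _ ⟨f, hf, g, hg, rfl⟩
  exact ⟨f, degreeLT_mono hs hf, g, degreeLT_mono ht hg, rfl⟩

theorem finrank_degreeLT' (F : Type*) [Field F] (n : ℕ) :
    Module.finrank F (degreeLT F n) = n := by
  rw [(degreeLTEquiv F n).finrank_eq, Module.finrank_fin_fun]

theorem finrank_polyPairs {F E : Type*} [Field F] [Field E] [Algebra F E] {a : E} {h : ℕ}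
    (ha : ∀ p ∈ degreeLT F h, aeval a p = 0 → p = 0) {s t : ℕ} (hs : s ≤ h) (ht : t ≤ h) :
    Module.finrank F (polyPairs (F := F) a s t) = s + t := by
  let φ : (degreeLT F s × degreeLT F t) →ₗ[F] (Fin 2 → E) :=
    { toFun := fun p => ![aeval a p.1.1, aeval a p.2.1]
      map_add' := by intro p q; simp
      map_smul' := by intro c p; simp }
  have hφ : Function.Injective φ := by
    rw [← LinearMap.ker_eq_bot, LinearMap.ker_eq_bot']
    rintro ⟨⟨f, hf⟩, ⟨g, hg⟩⟩ h0
    have h1 := congrFun h0 0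
    have h2 := congrFun h0 1
    simp only [φ, LinearMap.coe_mk, AddHom.coe_mk, Matrix.cons_val_zero, Matrix.cons_val_one,
      Pi.zero_apply] at h1 h2
    have := ha f (degreeLT_mono hs hf) h1
    have := ha g (degreeLT_mono ht hg) h2
    subst f g
    rfl
  have hr : polyPairs (F := F) a s t = LinearMap.range φ := by
    ext v
    constructor
    · rintro ⟨f, hf, g, hg, rfl⟩
      exact ⟨(⟨f, hf⟩, ⟨g, hg⟩), rfl⟩
    · rintro ⟨⟨⟨f, hf⟩, ⟨g, hg⟩⟩, rfl⟩
      exact ⟨f, hf, g, hg, rfl⟩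
  rw [hr, LinearMap.finrank_range_of_inj hφ, Module.finrank_prod, finrank_degreeLT',
    finrank_degreeLT']

/-- For `f, g` not both zero, the number `m` such that `deg (c f) < s` and `deg (c g) < t` hold
together exactly when `deg c < m`. -/
noncomputable def multBound {F : Type*} [Field F] (f g : F[X]) (s t : ℕ) : ℕ :=
  open Classical in
  if f = 0 then t - g.natDegree else if g = 0 then s - f.natDegree
  else min (s - f.natDegree) (t - g.natDegree)

theorem mul_mem_degreeLT_iff {F : Type*} [Field F] {c f : F[X]} (hf : f ≠ 0) (s : ℕ) :
    c * f ∈ degreeLT F s ↔ c ∈ degreeLT F (s - f.natDegree) := by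
  by_cases hc : c = 0
  · simp [hc]
  · rw [mem_degreeLT, mem_degreeLT, ← natDegree_lt_iff_degree_lt (mul_ne_zero hc hf),
      ← natDegree_lt_iff_degree_lt hc, natDegree_mul hc hf]
    omega

theorem mem_degreeLT_multBound {F : Type*} [Field F] {f g : F[X]} (h0 : f ≠ 0 ∨ g ≠ 0)
    (s t : ℕ) (c : F[X]) :
    c ∈ degreeLT F (multBound f g s t) ↔ c * f ∈ degreeLT F s ∧ c * g ∈ degreeLT F t := by
  unfold multBound
  split_ifs with hf hg
  · have hg : g ≠ 0 := h0.resolve_left (by simpa using hf)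
    simp [hf, mul_mem_degreeLT_iff hg]
  · simp [hg, mul_mem_degreeLT_iff hf]
  · rw [mul_mem_degreeLT_iff hf, mul_mem_degreeLT_iff hg]
    simp only [mem_degreeLT]
    rw [← lt_min_iff]
    norm_cast

theorem multBound_pred {F : Type*} [Field F] (f g : F[X]) (s t : ℕ) :
    multBound f g (s - 1) (t - 1) = multBound f g s t - 1 := by
  unfold multBound
  split_ifs <;> omega

/-- If `a g = b f` with `f, g` coprime, then `(a, b)` is a multiple of `(f, g)`. -/
theorem exists_eq_mul_of_isCoprime {F : Type*} [Field F] {f g a b : F[X]} (hc : IsCoprime f g)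
    (h : a * g = b * f) : ∃ c, a = c * f ∧ b = c * g := by
  obtain ⟨x, y, hxy⟩ := hc
  refine ⟨a * x + b * y, ?_, ?_⟩
  · linear_combination (-a) * hxy + y * h
  · linear_combination (-b) * hxy - x * h

/-- The pairs in `polyPairs a s t` lying on the point `⟨(f(a), g(a))⟩`, with `f, g` coprime, are the
multiples `(c f, c g)` with `deg c < multBound f g s t`. The bounds on the degrees turn a
proportionality over `E` into a polynomial identity. -/
theorem weightOf_polyPairs {F E : Type*} [Field F] [Field E] [Algebra F E] {a : E} {h : ℕ}
    (ha : ∀ p ∈ degreeLT F h, aeval a p = 0 → p = 0) {s t s' t' : ℕ} (hst : s + t ≤ h)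
    (hs : s' ≤ s) (ht : t' ≤ t) {f g : F[X]} (hfs : f ∈ degreeLT F s) (hgt : g ∈ degreeLT F t)
    (hc : IsCoprime f g) :
    weightOf (polyPairs (F := F) a s' t') (Submodule.span E {![aeval a f, aeval a g]})
      = multBound f g s' t' := by
  have h0 : f ≠ 0 ∨ g ≠ 0 := by
    by_contra! H
    rw [H.1, H.2] at hc
    exact not_isCoprime_zero_zero hc
  let φ : degreeLT F (multBound f g s' t') →ₗ[F] (Fin 2 → E) :=
    { toFun := fun c => ![aeval a (c.1 * f), aeval a (c.1 * g)]
      map_add' := by intro p q; simp [add_mul]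
      map_smul' := by intro c p; simp }
  have hφ : Function.Injective φ := by
    rw [← LinearMap.ker_eq_bot, LinearMap.ker_eq_bot']
    rintro ⟨c, hcm⟩ hz
    have h1 := congrFun hz 0
    have h2 := congrFun hz 1
    simp only [φ, LinearMap.coe_mk, AddHom.coe_mk, Matrix.cons_val_zero, Matrix.cons_val_one,
      Pi.zero_apply] at h1 h2
    obtain ⟨k1, k2⟩ := (mem_degreeLT_multBound h0 s' t' c).1 hcm
    have e1 := ha _ (degreeLT_mono (by omega) k1) h1
    have e2 := ha _ (degreeLT_mono (by omega) k2) h2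
    have : c = 0 := by
      rcases h0 with h0 | h0
      · exact (mul_eq_zero.1 e1).resolve_right h0
      · exact (mul_eq_zero.1 e2).resolve_right h0
    subst this
    rfl
  have hr : polyPairs (F := F) a s' t' ⊓ Submodule.restrictScalars F
      (Submodule.span E {![aeval a f, aeval a g]}) = LinearMap.range φ := by
    ext v
    constructor
    · rintro ⟨⟨p, hp, r, hrr, rfl⟩, hv⟩
      obtain ⟨e, he⟩ := Submodule.mem_span_singleton.1 hv
      have h1 : e * aeval a f = aeval a p := by simpa using congrFun he 0
      have h2 : e * aeval a g = aeval a r := by simpa using congrFun he 1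
      have hmul : ∀ {x y : F[X]}, x ∈ degreeLT F s → y ∈ degreeLT F t →
          x * y ∈ degreeLT F h := by
        intro x y hx hy
        by_cases hx0 : x = 0
        · simp [hx0]
        by_cases hy0 : y = 0
        · simp [hy0]
        rw [mem_degreeLT, ← natDegree_lt_iff_degree_lt hx0] at hx
        rw [mem_degreeLT, ← natDegree_lt_iff_degree_lt hy0] at hy
        rw [mem_degreeLT, ← natDegree_lt_iff_degree_lt (mul_ne_zero hx0 hy0),
          natDegree_mul hx0 hy0]
        omega
      have hz : p * g - r * f = 0 := by
        apply ha
        · refine sub_mem (hmul (degreeLT_mono hs hp) hgt) ?_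
          rw [mul_comm]
          exact hmul hfs (degreeLT_mono ht hrr)
        · simp only [map_sub, map_mul, ← h1, ← h2]
          ring
      obtain ⟨c, rfl, rfl⟩ := exists_eq_mul_of_isCoprime hc (sub_eq_zero.1 hz)
      exact ⟨⟨c, (mem_degreeLT_multBound h0 s' t' c).2 ⟨hp, hrr⟩⟩, rfl⟩
    · rintro ⟨⟨c, hcm⟩, rfl⟩
      obtain ⟨k1, k2⟩ := (mem_degreeLT_multBound h0 s' t' c).1 hcm
      refine ⟨⟨_, k1, _, k2, rfl⟩, Submodule.mem_span_singleton.2 ⟨aeval a c, ?_⟩⟩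
      simp [φ]
  rw [weightOf, hr, LinearMap.finrank_range_of_inj hφ, finrank_degreeLT']

/-- Every point of the linear set is represented by a coprime pair of polynomials satisfying the
same degree bounds: divide by the gcd. -/
theorem exists_coprime_rep {F E : Type*} [Field F] [Field E] [Algebra F E] {a : E} {s t : ℕ}
    {W : Submodule E (Fin 2 → E)} (hW : W ∈ linearSet (polyPairs (F := F) a s t)) :
    ∃ f ∈ degreeLT F s, ∃ g ∈ degreeLT F t, IsCoprime f g ∧
      W = Submodule.span E {![aeval a f, aeval a g]} := by
  classical
  obtain ⟨_, ⟨f, hf, g, hg, rfl⟩, hu, rfl⟩ := hW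
  have h0 : ¬ (f = 0 ∧ g = 0) := by
    rintro ⟨rfl, rfl⟩
    apply hu
    ext i; fin_cases i <;> simp
  have hd0 : EuclideanDomain.gcd f g ≠ 0 := by
    rwa [Ne, EuclideanDomain.gcd_eq_zero_iff]
  obtain ⟨f', hf'⟩ := EuclideanDomain.gcd_dvd_left f g
  obtain ⟨g', hg'⟩ := EuclideanDomain.gcd_dvd_right f g
  have hcop : IsCoprime f' g' := by
    have hb := EuclideanDomain.gcd_eq_gcd_ab f g
    refine ⟨EuclideanDomain.gcdA f g, EuclideanDomain.gcdB f g, mul_left_cancel₀ hd0 ?_⟩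
    linear_combination (-1) * hb - EuclideanDomain.gcdA f g * hf' - EuclideanDomain.gcdB f g * hg'
  generalize EuclideanDomain.gcd f g = d at hd0 hf' hg'
  have hle : ∀ {x : F[X]} {n : ℕ}, d * x ∈ degreeLT F n → x ∈ degreeLT F n := by
    intro x n hx
    rw [mem_degreeLT] at hx ⊢
    exact (degree_le_mul_left x hd0 |>.trans_eq (by rw [mul_comm])).trans_lt hx
  subst hf' hg'
  refine ⟨f', hle hf, g', hle hg, hcop, ?_⟩
  have hda : aeval a d ≠ 0 := by
    intro hz
    apply hu
    ext i; fin_cases i <;> simp [hz]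
  have : ![aeval a (d * f'), aeval a (d * g')] = aeval a d • ![aeval a f', aeval a g'] := by
    simp
  rw [this]
  exact Submodule.span_singleton_smul_eq (IsUnit.mk0 _ hda) _

/-- The nonzero vectors of a subspace `U' ≤ U` are partitioned by the points of `L_U`. -/
theorem sum_weightOf {F E : Type*} [Field F] [Fintype F] [Field E] [Fintype E] [Algebra F E]
    {n : ℕ} {U U' : Submodule F (Fin n → E)} (hU : U' ≤ U) (L : Finset (Submodule E (Fin n → E)))
    (hL : ∀ W, W ∈ L ↔ W ∈ linearSet U) :
    Fintype.card F ^ Module.finrank F U' =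
      ∑ W ∈ L, (Fintype.card F ^ weightOf U' W - 1) + 1 := by
  classical
  have hcard : ∀ V : Submodule F (Fin n → E),
      (Finset.univ.filter fun v => v ∈ V).card = Fintype.card F ^ Module.finrank F V := by
    intro V
    rw [← Module.card_eq_pow_finrank (K := F) (V := V), Fintype.card_subtype]
  have hcard' : ∀ V : Submodule F (Fin n → E),
      (Finset.univ.filter fun v => v ∈ V ∧ v ≠ 0).card
        = Fintype.card F ^ Module.finrank F V - 1 := by
    intro V
    rw [← hcard V, ← Finset.card_erase_of_mem (a := (0 : Fin n → E)) (by simp)]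
    congr 1
    ext v
    simp [and_comm]
  have hpos : 0 < Fintype.card F ^ Module.finrank F U' := by
    have := Fintype.card_pos (α := F); positivity
  have hfib := Finset.card_eq_sum_card_fiberwise
    (s := Finset.univ.filter fun v => v ∈ U' ∧ v ≠ 0) (t := L)
    (f := fun v : Fin n → E => Submodule.span E {v}) (by
      intro v hv
      simp only [Finset.coe_filter, Finset.mem_univ, true_and, Set.mem_ofPred_eq] at hv
      exact (hL _).2 ⟨v, hU hv.1, hv.2, rfl⟩)
  rw [hcard'] at hfib
  have hfib' : ∑ W ∈ L, (Fintype.card F ^ weightOf U' W - 1) =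
      Fintype.card F ^ Module.finrank F U' - 1 := by
    rw [hfib]
    refine Finset.sum_congr rfl fun W hW => ?_
    rw [weightOf, ← hcard', Finset.filter_filter]
    congr 1
    ext v
    simp only [Finset.mem_filter, Finset.mem_univ, true_and, Submodule.mem_inf,
      Submodule.restrictScalars_mem]
    obtain ⟨u, -, hu0, rfl⟩ := (hL W).1 hW
    constructor
    · rintro ⟨⟨hv, hvW⟩, hv0⟩
      refine ⟨⟨hv, hv0⟩, ?_⟩
      obtain ⟨e, rfl⟩ := Submodule.mem_span_singleton.1 hvW
      exact Submodule.span_singleton_smul_eq (IsUnit.mk0 _ fun he => hv0 (by simp [he])) _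
    · rintro ⟨⟨hv, hv0⟩, hvW⟩
      exact ⟨⟨hv, hvW ▸ Submodule.mem_span_singleton_self v⟩, hv0⟩
  omega

/-- Corollary 2.7 of the paper. For `2 ≤ k ≤ h` and any integer `j` with
`k/2 ≤ j ≤ k - 1` there is a rank-`k` `F_q`-linear set in `PG(1, q^h)` of size
`q^(k-1) + 1` whose heaviest point has weight exactly `j`. -/
theorem stmt7 (q h k j : ℕ) (F E : Type*) [Field F] [Fintype F] [Field E] [Fintype E]
    [Algebra F E] (hq : Fintype.card F = q) (hE : Fintype.card E = q ^ h)
    (hh : Module.finrank F E = h)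
    (hk2 : 2 ≤ k) (hkh : k ≤ h) (hj1 : k ≤ 2 * j) (hj2 : j ≤ k - 1) :
    ∃ U : Submodule F (Fin 2 → E), Module.finrank F U = k ∧
      (linearSet U).ncard = q ^ (k - 1) + 1 ∧
      (∃ W ∈ linearSet U, weightOf U W = j) ∧
      (∀ W ∈ linearSet U, weightOf U W ≤ j) := by
  classical
  obtain ⟨a, ha⟩ := Field.exists_primitive_element F E
  have hdeg : (minpoly F a).natDegree = h :=
    hh ▸ (Field.primitive_element_iff_minpoly_natDegree_eq F a).1 ha
  have hinj : ∀ p ∈ degreeLT F h, aeval a p = 0 → p = 0 := by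
    intro p hp hz
    by_contra hp0
    have h1 := natDegree_le_of_dvd (minpoly.dvd F a hz) hp0
    rw [mem_degreeLT, ← natDegree_lt_iff_degree_lt hp0] at hp
    omega
  have hst : j + (k - j) ≤ h := by omega
  have hone : (1 : F[X]) ∈ degreeLT F j := by
    rw [mem_degreeLT, ← natDegree_lt_iff_degree_lt one_ne_zero, natDegree_one]
    omega
  have hU : Module.finrank F (polyPairs (F := F) a j (k - j)) = k := by
    rw [finrank_polyPairs hinj (by omega) (by omega)]
    omega
  refine ⟨polyPairs a j (k - j), hU, ?_, ?_, ?_⟩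
  · have hq1 : 1 < q := hq ▸ Fintype.one_lt_card
    have hU' : Module.finrank F (polyPairs (F := F) a (j - 1) (k - j - 1)) = k - 2 := by
      rw [finrank_polyPairs hinj (by omega) (by omega)]
      omega
    have hfin : (linearSet (polyPairs (F := F) a j (k - j))).Finite := Set.toFinite _
    rw [Set.ncard_eq_toFinset_card _ hfin]
    set L := hfin.toFinset with hLdef
    have hL : ∀ W, W ∈ L ↔ W ∈ linearSet (polyPairs (F := F) a j (k - j)) := by
      intro W; simp [hLdef]
    have e1 := sum_weightOf le_rfl L hL
    have e2 := sum_weightOf (polyPairs_mono (F := F) a (Nat.sub_le j 1) (Nat.sub_le (k - j) 1)) L hL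
    rw [hU, hq] at e1
    rw [hU', hq] at e2
    -- Passing to the smaller subspace lowers the weight of every point of `L` by exactly one.
    have e3 : ∑ W ∈ L, (q ^ weightOf (polyPairs (F := F) a j (k - j)) W - 1) =
        ∑ W ∈ L, (q * (q ^ weightOf (polyPairs (F := F) a (j - 1) (k - j - 1)) W - 1)
          + (q - 1)) := by
      refine Finset.sum_congr rfl fun W hW => ?_
      obtain ⟨f, hf, g, hg, hc, rfl⟩ := exists_coprime_rep ((hL W).1 hW)
      rw [weightOf_polyPairs hinj hst le_rfl le_rfl hf hg hc,
        weightOf_polyPairs hinj hst (Nat.sub_le j 1) (Nat.sub_le (k - j) 1) hf hg hc,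
        multBound_pred]
      have h0 : f ≠ 0 ∨ g ≠ 0 := by
        by_contra! H
        rw [H.1, H.2] at hc
        exact not_isCoprime_zero_zero hc
      have hm : 1 ≤ multBound f g j (k - j) := by
        have h1 := (mem_degreeLT_multBound h0 j (k - j) 1).2 (by simpa using ⟨hf, hg⟩)
        rw [mem_degreeLT, ← natDegree_lt_iff_degree_lt one_ne_zero] at h1
        omega
      obtain ⟨m, hm'⟩ := Nat.exists_eq_add_of_le' hm
      rw [hm', Nat.add_sub_cancel, pow_succ', Nat.mul_sub]
      have : q * 1 ≤ q * q ^ m := Nat.mul_le_mul_left _ (Nat.one_le_pow _ _ (by omega))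
      omega
    rw [e3, Finset.sum_add_distrib, ← Finset.mul_sum, Finset.sum_const, smul_eq_mul] at e1
    obtain ⟨r, rfl⟩ := Nat.exists_eq_add_of_le' hk2
    obtain ⟨p, rfl⟩ := Nat.exists_eq_add_of_le' hq1.le
    simp only [Nat.add_sub_cancel] at e1 e2
    rw [show r + 2 - 1 = r + 1 by omega]
    have hp : 0 < p := by omega
    refine Nat.eq_of_mul_eq_mul_right hp ?_
    zify at e1 e2 ⊢
    linear_combination (p + 1 : ℤ) * e2 - e1
  · refine ⟨Submodule.span E {![aeval a (1 : F[X]), aeval a (0 : F[X])]},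
      ⟨_, ⟨1, hone, 0, zero_mem _, rfl⟩, fun hz => ?_, rfl⟩, ?_⟩
    · simpa using congrFun hz 0
    · rw [weightOf_polyPairs hinj hst le_rfl le_rfl hone (zero_mem _) isCoprime_one_left]
      simp [multBound]
  · intro W hW
    obtain ⟨f, hf, g, hg, hc, rfl⟩ := exists_coprime_rep hW
    rw [weightOf_polyPairs hinj hst le_rfl le_rfl hf hg hc]
    unfold multBound
    split_ifs <;> omega
end

section
/- Let F_q be the finite field with q elements, F_{q^h} an extension, and α ∈ F_{q^h} \ F_q with [F_q(α):F_q] = s. Let l ≥ 1 and let 1 ≤ t1 ≤ t2 ≤ … ≤ t_{l+1} be integers with t_i + t_j ≤ s + 1 for all i ≠ j. Let L be the set of projective points ⟨(g1(α), …, g_{l+1}(α))⟩ of PG(l,q^h) where g_i ∈ F_q[X] with deg(g_i) ≤ t_i−1 for all i, not all zero. Then the map (f1, …, f_{l+1}) ↦ ⟨(f1(α), …, f_{l+1}(α))⟩ is a bijection from the set S = {(f1, …, f_{l+1}) : deg(f_i) ≤ t_i−1 for all i, (f1, …, f_{l+1}) in reduced form} onto L. -/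
/-!
Every `t i` is at most `s`, so a nonzero polynomial of degree at most `t i - 1` does not vanish
at `α`, whose minimal polynomial has degree `s`.

*Injectivity.* If `f` and `g` give the same point, then `f i (α) * g j (α) = f j (α) * g i (α)`.
For `i ≠ j` both products have degree at most `t i + t j - 2 < s`, so `f i * g j = f j * g i`
already holds for polynomials (`aeval_eq_imp_eq`). Hence two tuples with trivial gcd are
proportional by a Bézout combination, and normalising the first nonzero entry to be monic makes
them equal (`ReducedForm.eq_of_cross`).

*Surjectivity.* Dividing a nonzero tuple by its gcd and by the leading coefficient of its first
nonzero entry gives a reduced tuple (`exists_reducedForm`). Evaluating at `α`, the divisor becomes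
a nonzero scalar, so the projective point does not change.
-/

open Polynomial

/-- A polynomial relation at `α` between polynomials of degree less than that of the minimal
polynomial is an identity of polynomials. -/
lemma aeval_eq_imp_eq {F E : Type*} [Field F] [Field E] [Algebra F E] {α : E} {p r : F[X]}
    (hp : p.degree < (minpoly F α).natDegree) (hr : r.degree < (minpoly F α).natDegree)
    (h : aeval α p = aeval α r) : p = r := by
  by_contra hne
  have hpr : p - r ≠ 0 := sub_ne_zero.mpr hne
  have h1 := natDegree_le_of_dvd (minpoly.dvd F α (p := p - r) (by simp [h])) hpr
  have h2 := (degree_sub_le p r).trans_lt (max_lt hp hr)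
  rw [degree_eq_natDegree hpr, Nat.cast_lt] at h2
  omega

/-- The gcd of a finite tuple of polynomials, together with a Bézout combination producing it. -/
lemma exists_gcd_bezout {F : Type*} [Field F] {n : ℕ} (f : Fin n → F[X]) :
    ∃ d : F[X], (∀ i, d ∣ f i) ∧ ∃ a : Fin n → F[X], ∑ i, a i * f i = d := by
  have hprin : (Ideal.span (Set.range f)).IsPrincipal := inferInstance
  obtain ⟨d, hd⟩ := hprin
  refine ⟨d, fun i => ?_, ?_⟩
  · have : f i ∈ Ideal.span (Set.range f) := Ideal.subset_span ⟨i, rfl⟩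
    rw [hd] at this
    exact Ideal.mem_span_singleton.mp this
  · have : d ∈ Ideal.span (Set.range f) := by
      rw [hd]
      exact Ideal.mem_span_singleton_self d
    exact Ideal.mem_span_range_iff_exists_fun.mp this

/-- Reduced tuples whose `2 × 2` minors vanish are equal. -/
lemma ReducedForm.eq_of_cross {F : Type*} [Field F] {n : ℕ} {f g : Fin n → F[X]}
    (hf : ReducedForm f) (hg : ReducedForm g) (h : ∀ i j, f i * g j = f j * g i) : f = g := by
  classical
  obtain ⟨d, hd, a, ha⟩ := exists_gcd_bezout f
  obtain ⟨⟨i₁, hi₁⟩, hfm, hfd⟩ := hf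
  obtain ⟨-, hgm, hgd⟩ := hg
  obtain ⟨e, hde⟩ := (hfd d hd).exists_left_inv
  -- `u` is the proportionality factor: multiply `1 = e * ∑ a i * f i` by `g j`.
  set u := e * ∑ i, a i * g i with hu
  have hgu : ∀ j, g j = u * f j := by
    intro j
    calc g j = e * (∑ i, a i * f i) * g j := by rw [ha, hde, one_mul]
      _ = u * f j := by
        rw [hu, mul_assoc, mul_assoc, Finset.sum_mul, Finset.sum_mul]
        congr 1
        refine Finset.sum_congr rfl fun i _ => ?_
        linear_combination a i * h i j
  have huu : IsUnit u := hgd u fun j => ⟨f j, hgu j⟩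
  obtain ⟨c, -, hc⟩ := Polynomial.isUnit_iff.mp huu
  have hex : ∃ i, f i ≠ 0 := ⟨i₁, hi₁⟩
  obtain ⟨i₀, hi₀, hmin⟩ := WellFounded.has_min (wellFounded_lt (α := Fin n)) {i | f i ≠ 0} hex
  have hz : ∀ j, j < i₀ → f j = 0 := fun j hj => by
    by_contra hne
    exact hmin j hne hj
  have m1 := hfm i₀ hi₀ hz
  have m2 := hgm i₀ (by rw [hgu]; exact mul_ne_zero huu.ne_zero hi₀)
    fun j hj => by rw [hgu, hz j hj, mul_zero]
  have hc1 : c = 1 := by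
    have := m2.leadingCoeff
    rwa [hgu, ← hc, leadingCoeff_mul, leadingCoeff_C, m1.leadingCoeff, mul_one] at this
  funext j
  rw [hgu, ← hc, hc1, C_1, one_mul]

/-- A nonzero tuple is a polynomial multiple of a reduced one. -/
lemma exists_reducedForm_s8 {F : Type*} [Field F] {n : ℕ} (g : Fin n → F[X]) (hg : ∃ i, g i ≠ 0) :
    ∃ (u : F[X]) (f : Fin n → F[X]), ReducedForm f ∧ ∀ i, g i = u * f i := by
  obtain ⟨d, hd, a, ha⟩ := exists_gcd_bezout g
  choose k hk using hd
  obtain ⟨i₀, hi₀, hmin⟩ := WellFounded.has_min (wellFounded_lt (α := Fin n)) {i | g i ≠ 0} hg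
  have hd0 : d ≠ 0 := fun h => hi₀ (by rw [hk, h, zero_mul])
  have hki : k i₀ ≠ 0 := fun h => hi₀ (by rw [hk, h, mul_zero])
  have hz : ∀ j, j < i₀ → k j = 0 := fun j hj => by
    by_contra hne
    exact hmin j (show g j ≠ 0 by rw [hk]; exact mul_ne_zero hd0 hne) hj
  set c := (k i₀).leadingCoeff with hc
  have hc0 : c ≠ 0 := leadingCoeff_ne_zero.mpr hki
  have hcc : C c * C c⁻¹ = 1 := by rw [← C_mul, mul_inv_cancel₀ hc0, C_1]
  have hci : C c⁻¹ ≠ 0 := C_ne_zero.mpr (inv_ne_zero hc0)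
  refine ⟨d * C c, fun i => C c⁻¹ * k i, ⟨⟨i₀, mul_ne_zero hci hki⟩, ?_, ?_⟩, ?_⟩
  · intro i hi hlt
    have : i = i₀ := by
      rcases lt_trichotomy i i₀ with h | h | h
      · exact absurd (by simp only [hz i h, mul_zero]) hi
      · exact h
      · exact absurd (hlt i₀ h) (mul_ne_zero hci hki)
    subst this
    rw [Monic, leadingCoeff_mul, leadingCoeff_C, ← hc, inv_mul_cancel₀ hc0]
  · intro e he
    -- `d * e` divides every `g i`, hence divides the Bézout combination `d`.
    have h1 : d * e ∣ d := by
      conv_rhs => rw [← ha]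
      refine Finset.dvd_sum fun i _ => Dvd.dvd.mul_left ?_ _
      rw [hk i]
      refine mul_dvd_mul_left d ?_
      have : k i = C c * (C c⁻¹ * k i) := by rw [← mul_assoc, hcc, one_mul]
      rw [this]
      exact (he i).mul_left _
    have h2 : d * e ∣ d * 1 := by rwa [mul_one]
    exact isUnit_of_dvd_one ((mul_dvd_mul_iff_left hd0).mp h2)
  · intro i
    rw [hk i]
    linear_combination (-d * k i) * hcc

/-- Lemma 2.10 of the paper. Points of `PG(l, q^h)` are modelled as the
`1`-dimensional `E`-subspaces `span E {v}`, `v ≠ 0`. The evaluation map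
`(f1, …, f_{l+1}) ↦ ⟨(f1(α), …, f_{l+1}(α))⟩` is a bijection from the set of reduced-form
tuples with `deg f_i ≤ t_i - 1` onto the linear set `L`. -/
theorem stmt8 (q h s l : ℕ) (F E : Type*) [Field F] [Fintype F] [Field E] [Fintype E]
    [Algebra F E] (hq : Fintype.card F = q) (hE : Fintype.card E = q ^ h)
    (α : E) (hα : α ∉ Set.range (algebraMap F E)) (hs : (minpoly F α).natDegree = s)
    (hl : 1 ≤ l) (t : Fin (l + 1) → ℕ) (ht : ∀ i, 1 ≤ t i) (hmono : Monotone t)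
    (hpair : ∀ i j, i ≠ j → t i + t j ≤ s + 1) :
    Set.BijOn
      (fun f : Fin (l + 1) → F[X] =>
        Submodule.span E {fun i => aeval α (f i)})
      {f : Fin (l + 1) → F[X] | (∀ i, (f i).degree ≤ (t i - 1 : ℕ)) ∧ ReducedForm f}
      {W : Submodule E (Fin (l + 1) → E) | ∃ g : Fin (l + 1) → F[X],
        (∀ i, (g i).degree ≤ (t i - 1 : ℕ)) ∧ (∃ i, g i ≠ 0) ∧
        W = Submodule.span E {fun i => aeval α (g i)}} := by
  subst hs
  have hlt : ∀ i, t i ≤ (minpoly F α).natDegree := by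
    intro i
    have : Nontrivial (Fin (l + 1)) := Fin.nontrivial_iff_two_le.mpr (by omega)
    obtain ⟨j, hj⟩ := exists_ne i
    have := hpair i j hj.symm
    have := ht j
    omega
  have hdeg : ∀ (i : Fin (l + 1)) (p : F[X]), p.degree ≤ (t i - 1 : ℕ) →
      p.degree < (minpoly F α).natDegree := by
    intro i p hp
    refine hp.trans_lt ?_
    have := hlt i
    have := ht i
    exact_mod_cast (by omega : t i - 1 < (minpoly F α).natDegree)
  have hne : ∀ (i : Fin (l + 1)) (p : F[X]), p.degree ≤ (t i - 1 : ℕ) → p ≠ 0 →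
      aeval α p ≠ 0 := by
    intro i p hp hp0 h0
    exact hp0 (aeval_eq_imp_eq (hdeg i p hp) (by simp) (by rw [h0, map_zero]))
  refine ⟨?_, ?_, ?_⟩
  · rintro f ⟨hf, hr⟩
    exact ⟨f, hf, hr.1, rfl⟩
  · rintro f ⟨hf, hfr⟩ g ⟨hg, hgr⟩ hfg
    refine hfr.eq_of_cross hgr fun i j => ?_
    rcases eq_or_ne i j with rfl | hij
    · rfl
    have hmem : (fun i => aeval α (f i)) ∈ Submodule.span E {fun i => aeval α (g i)} := by
      have hfg' : Submodule.span E {fun i => aeval α (f i)}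
        = Submodule.span E {fun i => aeval α (g i)} := hfg
      rw [← hfg']
      exact Submodule.mem_span_singleton_self _
    obtain ⟨c, hc⟩ := Submodule.mem_span_singleton.mp hmem
    have hc' : ∀ i, aeval α (f i) = c * aeval α (g i) := fun i => (congrFun hc i).symm
    have key : ∀ a b : Fin (l + 1), a ≠ b →
        (f a * g b).degree < (minpoly F α).natDegree := by
      intro a b hab
      rw [degree_mul]
      refine (add_le_add (hf a) (hg b)).trans_lt ?_
      have := hpair a b hab
      have := ht a
      have := ht b
      exact_mod_cast (by omega : (t a - 1) + (t b - 1) < (minpoly F α).natDegree)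
    refine aeval_eq_imp_eq (key i j hij) (key j i hij.symm) ?_
    rw [map_mul, map_mul, hc', hc']
    ring
  · rintro W ⟨g, hg, ⟨i₀, hi₀⟩, rfl⟩
    obtain ⟨u, f, hfr, hgu⟩ := exists_reducedForm_s8 g ⟨i₀, hi₀⟩
    have hu0 : u ≠ 0 := fun h => hi₀ (by rw [hgu, h, zero_mul])
    have hua : aeval α u ≠ 0 := fun h => hne i₀ _ (hg i₀) hi₀ (by rw [hgu, map_mul, h, zero_mul])
    refine ⟨f, ⟨fun i => ?_, hfr⟩, ?_⟩
    · refine le_trans ?_ (hg i)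
      rw [hgu i, mul_comm]
      exact degree_le_mul_left _ hu0
    · have : (fun i => aeval α (g i)) = aeval α u • fun i => aeval α (f i) := by
        funext i
        simp [hgu i]
      simp only [this]
      exact (Submodule.span_singleton_smul_eq (IsUnit.mk0 _ hua) _).symm
end

section
/- Let F_q be the finite field with q elements and F_{q^h} its degree-h extension, and let l ≥ 1. For every integer k with l+1 ≤ k ≤ (l+1)(h+1)/2 if h is odd, and l+1 ≤ k ≤ 1 + (l+1)h/2 if h is even, there exists an F_q-subspace U of (F_{q^h})^{l+1} with dim_{F_q} U = k such that the linear set L_U has exactly q^{k−1} + q^{k−2} + … + q^{k−l} + 1 points. -/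
/-!
Let `a ≠ 0` generate `E` over `F`, and choose `t i ≥ 1` with sum `k` such that `t i ≤ h` and
`t i + t j ≤ h + 1` for `i ≠ j`. Let `U` consist of the vectors `(p₀(a), …, p_l(a))` with
`deg p i < t i`, and let `U'` be defined likewise from the exponents `t i - 1`. Since `a` has
degree `h` over `F`, the polynomials `p i` are determined by the vector, so `dim U = k` and
`dim U' = k - (l + 1)`.

The crucial fact is `|U ∩ W| = q |U' ∩ W|` for every point `W` of `L_U` (`card_inf_polyBox`).
Multiplication by `a` embeds `U' ∩ W` into `U ∩ W`, with image the tuples all of whose constant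
coefficients vanish. If `p` and `r` give vectors of `U ∩ W`, then `p i * r j = p j * r i` holds
after evaluation at `a`, hence already as polynomials because `t i + t j ≤ h + 1`; so their vectors
of constant coefficients are proportional. These are not all zero, since a tuple divisible by `X`
may be divided by `X` without leaving `U ∩ W`.

Summing `|U ∩ W| - 1` and `|U' ∩ W| - 1` over the points `W` of `L_U` counts the nonzero vectors of
`U` and `U'`, so `q ^ k - 1 + |L_U| = q (q ^ (k - l - 1) - 1 + |L_U|)`, which determines `|L_U|`.
-/

open Polynomial

/-! ### Spaces of values of bounded-degree polynomials -/

/-- The `F`-subspace of `E^n` of all vectors `(p₀(a), …, p_{n-1}(a))` with `deg p i < t i`. -/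
noncomputable def polyBox {F E : Type*} [Field F] [Field E] [Algebra F E] {n : ℕ} (a : E)
    (t : Fin n → ℕ) : Submodule F (Fin n → E) :=
  LinearMap.range (LinearMap.pi fun i =>
    (aeval a).toLinearMap ∘ₗ (degreeLT F (t i)).subtype ∘ₗ
      (LinearMap.proj i : (∀ i, degreeLT F (t i)) →ₗ[F] _))

section

variable {F E : Type*} [Field F] [Field E] [Algebra F E] {n : ℕ}

lemma mem_polyBox {a : E} {t : Fin n → ℕ} {u : Fin n → E} :
    u ∈ polyBox (F := F) a t ↔
      ∃ p : Fin n → F[X], (∀ i, (p i).degree < t i) ∧ ∀ i, aeval a (p i) = u i := by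
  constructor
  · rintro ⟨p, rfl⟩
    exact ⟨fun i => p i, fun i => mem_degreeLT.1 (p i).2, fun i => rfl⟩
  · rintro ⟨p, hp, hu⟩
    exact ⟨fun i => ⟨p i, mem_degreeLT.2 (hp i)⟩, funext hu⟩

lemma finrank_polyBox {a : E} {h : ℕ} (hroot : ∀ p : F[X], p.degree < h → aeval a p = 0 → p = 0)
    {t : Fin n → ℕ} (ht : ∀ i, t i ≤ h) :
    Module.finrank F (polyBox (F := F) a t) = ∑ i, t i := by
  have hfin : ∀ i, Module.Finite F (degreeLT F (t i)) := fun i =>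
    Module.Finite.equiv (degreeLTEquiv F (t i)).symm
  rw [polyBox, LinearMap.finrank_range_of_inj, Module.finrank_pi_fintype]
  · refine Finset.sum_congr rfl fun i _ => ?_
    rw [(degreeLTEquiv F (t i)).finrank_eq, Module.finrank_fin_fun]
  · rw [← LinearMap.ker_eq_bot, LinearMap.ker_eq_bot']
    intro p hp
    funext i
    refine Subtype.ext (hroot _ ?_ (congrFun hp i))
    exact (mem_degreeLT.1 (p i).2).trans_le (by exact_mod_cast ht i)

lemma polyBox_mono {a : E} {s t : Fin n → ℕ} (hst : ∀ i, s i ≤ t i) :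
    polyBox (F := F) a s ≤ polyBox a t := by
  intro u hu
  obtain ⟨p, hp, hu⟩ := mem_polyBox.1 hu
  exact mem_polyBox.2 ⟨p, fun i => (hp i).trans_le (by exact_mod_cast hst i), hu⟩

lemma degree_divX_lt_sub_one {p : F[X]} {m : ℕ} (hp : p.degree < m) :
    p.divX.degree < (m - 1 : ℕ) := by
  rw [degree_lt_iff_coeff_zero] at hp ⊢
  intro j hj
  rw [coeff_divX]
  exact hp _ (by omega)

lemma degree_X_mul_lt {p : F[X]} {m : ℕ} (hp : p.degree < (m - 1 : ℕ)) (hm : 1 ≤ m) :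
    (X * p : F[X]).degree < m := by
  rw [degree_lt_iff_coeff_zero] at hp ⊢
  intro j hj
  obtain ⟨j, rfl⟩ : ∃ i, j = i + 1 := ⟨j - 1, by omega⟩
  rw [coeff_X_mul]
  exact hp _ (by omega)

lemma aeval_eq_mul_aeval_divX (a : E) {p : F[X]} (hp : p.coeff 0 = 0) :
    aeval a p = a * aeval a p.divX := by
  conv_lhs => rw [← divX_mul_X_add p]
  simp [hp, mul_comm]

/-! ### Vectors on a single point -/

/-- Tuples in the box whose vectors are proportional over `E` are proportional as polynomials. -/
lemma mul_eq_mul_of_proportional {a : E} {h : ℕ}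
    (hroot : ∀ p : F[X], p.degree < h → aeval a p = 0 → p = 0)
    {t : Fin n → ℕ} (ht2 : ∀ i j, i ≠ j → t i + t j ≤ h + 1)
    {w : Fin n → E} {p r : Fin n → F[X]}
    (hp : ∀ i, (p i).degree < t i) (hr : ∀ i, (r i).degree < t i)
    (hpw : (fun i => aeval a (p i)) ∈ Submodule.span E {w})
    (hrw : (fun i => aeval a (r i)) ∈ Submodule.span E {w}) (i j : Fin n) :
    p i * r j = p j * r i := by
  rcases eq_or_ne i j with rfl | hij
  · rfl
  have key : ∀ p r : Fin n → F[X], (∀ i, (p i).degree < t i) → (∀ i, (r i).degree < t i) →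
      ∀ i j, i ≠ j → (p i * r j).degree < h := by
    intro p r hp hr i j hij
    by_cases h0 : p i * r j = 0
    · rw [h0, degree_zero]
      exact WithBot.bot_lt_coe _
    · have h1 := left_ne_zero_of_mul h0
      have h2 := right_ne_zero_of_mul h0
      rw [← natDegree_lt_iff_degree_lt h0, natDegree_mul h1 h2]
      have h3 := (natDegree_lt_iff_degree_lt h1).2 (hp i)
      have h4 := (natDegree_lt_iff_degree_lt h2).2 (hr j)
      have := ht2 i j hij
      omega
  obtain ⟨x, hx⟩ := Submodule.mem_span_singleton.1 hpw
  obtain ⟨y, hy⟩ := Submodule.mem_span_singleton.1 hrw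
  have hx' : ∀ i, aeval a (p i) = x * w i := fun i => (congrFun hx i).symm
  have hy' : ∀ i, aeval a (r i) = y * w i := fun i => (congrFun hy i).symm
  refine sub_eq_zero.1 (hroot _ ?_ ?_)
  · exact (degree_sub_le _ _).trans_lt
      (max_lt (key p r hp hr i j hij) (key p r hp hr j i hij.symm))
  · simp only [map_sub, map_mul, hx', hy']
    ring

/-- If `W` contains the vector of a nonzero tuple in the box, then it contains the vector of one that
is not divisible by `X`: divide by `X` as often as possible. -/
lemma exists_coeff_zero_ne {a : E} (ha : a ≠ 0) {t : Fin n → ℕ} {W : Submodule E (Fin n → E)}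
    {p : Fin n → F[X]} (hp : ∀ i, (p i).degree < t i) (hpW : (fun i => aeval a (p i)) ∈ W)
    {i : Fin n} (hi : p i ≠ 0) :
    ∃ r : Fin n → F[X], (∀ i, (r i).degree < t i) ∧ (fun i => aeval a (r i)) ∈ W ∧
      ∃ j, (r j).coeff 0 ≠ 0 := by
  induction hN : (p i).natDegree using Nat.strong_induction_on generalizing p with
  | _ N ih =>
    by_cases hj : ∃ j, (p j).coeff 0 ≠ 0
    · exact ⟨p, hp, hpW, hj⟩
    push Not at hj
    have hi' : (p i).divX ≠ 0 := by
      intro h0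
      apply hi
      rw [← divX_mul_X_add (p i), h0, hj i]
      simp
    have hN0 : N ≠ 0 := by
      intro h0
      apply hi'
      rw [divX_eq_zero_iff]
      exact eq_C_of_natDegree_eq_zero (hN.trans h0)
    refine ih (N - 1) (by omega) (p := fun j => (p j).divX) ?_ ?_ hi' ?_
    · intro j
      exact (degree_divX_lt_sub_one (hp j)).trans_le (by exact_mod_cast Nat.sub_le _ _)
    · convert W.smul_mem a⁻¹ hpW using 1
      funext j
      simp [aeval_eq_mul_aeval_divX a (hj j), ha]
    · rw [natDegree_divX_eq_natDegree_tsub_one, hN]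

/-- Passing from the exponents `t i - 1` to `t i` multiplies by `|F|` the number of vectors on each
point of the linear set. With `v` the vector of a tuple not divisible by `X`, the bijection is
`(c, u) ↦ c • v + a • u`. -/
lemma card_inf_polyBox [Finite F] [Finite E] {a : E} (ha : a ≠ 0) {h : ℕ}
    (hroot : ∀ p : F[X], p.degree < h → aeval a p = 0 → p = 0)
    {t : Fin n → ℕ} (ht1 : ∀ i, 1 ≤ t i) (ht : ∀ i, t i ≤ h)
    (ht2 : ∀ i j, i ≠ j → t i + t j ≤ h + 1)
    {W : Submodule E (Fin n → E)} (hW : W ∈ linearSet (polyBox (F := F) a t)) :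
    Nat.card {u // u ∈ polyBox (F := F) a t ∧ u ∈ W} =
      Nat.card F * Nat.card {u // u ∈ polyBox (F := F) a (fun i => t i - 1) ∧ u ∈ W} := by
  obtain ⟨w, hwU, hw0, rfl⟩ := hW
  obtain ⟨p, hp, hpw⟩ := mem_polyBox.1 hwU
  obtain ⟨i, hi⟩ : ∃ i, p i ≠ 0 := by
    by_contra! hcon
    apply hw0
    funext i
    rw [← hpw i, hcon i]
    simp
  obtain ⟨r, hr, hrW, j, hj⟩ := exists_coeff_zero_ne ha (W := Submodule.span E {w}) hp
    (by rw [funext hpw]; exact Submodule.mem_span_singleton_self w) hi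
  rw [← Nat.card_prod]
  symm
  set v : Fin n → E := fun i => aeval a (r i) with hv
  have hvU : v ∈ polyBox (F := F) a t := mem_polyBox.2 ⟨r, hr, fun i => rfl⟩
  have hmulU : ∀ u ∈ polyBox (F := F) a (fun i => t i - 1), a • u ∈ polyBox (F := F) a t := by
    intro u hu
    obtain ⟨s, hs, hsu⟩ := mem_polyBox.1 hu
    exact mem_polyBox.2 ⟨fun i => X * s i, fun i => degree_X_mul_lt (hs i) (ht1 i),
      fun i => by simp [hsu]⟩
  have hsmulW : ∀ (c : F) (u : Fin n → E), u ∈ Submodule.span E {w} →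
      c • u ∈ Submodule.span E {w} := by
    intro c u hu
    rw [← algebraMap_smul E c u]
    exact Submodule.smul_mem _ _ hu
  let f : F × {u // u ∈ polyBox (F := F) a (fun i => t i - 1) ∧ u ∈ Submodule.span E {w}} →
      {u // u ∈ polyBox (F := F) a t ∧ u ∈ Submodule.span E {w}} := fun x =>
    ⟨x.1 • v + a • x.2.1, Submodule.add_mem _ (Submodule.smul_mem _ _ hvU) (hmulU _ x.2.2.1),
      Submodule.add_mem _ (hsmulW _ _ hrW) (Submodule.smul_mem _ _ x.2.2.2)⟩
  refine Nat.card_eq_of_bijective f ⟨?_, ?_⟩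
  · rintro ⟨c, u, hu, huW⟩ ⟨d, u', hu', huW'⟩ heq
    have heq' : c • v + a • u = d • v + a • u' := congrArg Subtype.val heq
    obtain ⟨s, hs, hsu⟩ := mem_polyBox.1 (Submodule.sub_mem _ hu' hu)
    have hcd : c = d := by
      -- The `j`-th coordinate is a polynomial identity; its constant coefficient is
      -- `(c - d) * (r j).coeff 0 = 0`.
      have h0 : C (c - d) * r j - X * s j = 0 := by
        refine hroot _ ?_ ?_
        · refine lt_of_lt_of_le ?_ (show ((t j : ℕ) : WithBot ℕ) ≤ h by exact_mod_cast ht j)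
          refine (degree_sub_le _ _).trans_lt (max_lt ?_ (degree_X_mul_lt (hs j) (ht1 j)))
          rw [← smul_eq_C_mul]
          exact (degree_smul_le _ _).trans_lt (hr j)
        · have := congrFun heq' j
          rw [Pi.add_apply, Pi.add_apply, Pi.smul_apply, Pi.smul_apply, Pi.smul_apply,
            Pi.smul_apply, Algebra.smul_def c, Algebra.smul_def d, smul_eq_mul, smul_eq_mul] at this
          simp only [map_sub, map_mul, aeval_X, aeval_C, hsu, Pi.sub_apply]
          change algebraMap F E c * v j + a * u j = algebraMap F E d * v j + a * u' j at this
          linear_combination this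
      have h1 := congrArg (fun g => coeff g 0) h0
      simp only [coeff_sub, mul_coeff_zero, coeff_X_zero, zero_mul, sub_zero,
        coeff_zero, coeff_C_zero] at h1
      exact sub_eq_zero.1 ((mul_eq_zero.1 h1).resolve_right hj)
    subst hcd
    have huu : u = u' := smul_right_injective _ ha (add_left_cancel heq')
    subst huu
    rfl
  · rintro ⟨u, hu, huW⟩
    obtain ⟨g, hg, hgu⟩ := mem_polyBox.1 hu
    have hprop := mul_eq_mul_of_proportional hroot ht2 hg hr
      (by rw [funext hgu]; exact huW) hrW
    set c : F := (g j).coeff 0 / (r j).coeff 0 with hc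
    have hcoeff : ∀ i, (g i - C c * r i).coeff 0 = 0 := by
      intro i
      have h1 := congrArg (fun g => coeff g 0) (hprop i j)
      simp only [mul_coeff_zero] at h1
      simp only [coeff_sub, coeff_C_mul, hc]
      field_simp
      linear_combination h1
    have hmul : ∀ i, a * aeval a (g i - C c * r i).divX = u i - algebraMap F E c * v i := by
      intro i
      rw [← aeval_eq_mul_aeval_divX a (hcoeff i)]
      simp [hgu, hv]
    have hdiv : (fun i => aeval a (g i - C c * r i).divX) = a⁻¹ • (u - c • v) := by
      funext i
      rw [Pi.smul_apply, Pi.sub_apply, Pi.smul_apply, Algebra.smul_def c, smul_eq_mul, ← hmul,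
        inv_mul_cancel_left₀ ha]
    refine ⟨⟨c, fun i => aeval a (g i - C c * r i).divX, ?_, ?_⟩, ?_⟩
    · refine mem_polyBox.2 ⟨_, fun i => degree_divX_lt_sub_one ?_, fun i => rfl⟩
      refine (degree_sub_le _ _).trans_lt (max_lt (hg i) ?_)
      rw [← smul_eq_C_mul]
      exact (degree_smul_le _ _).trans_lt (hr i)
    · rw [hdiv]
      exact Submodule.smul_mem _ _ (Submodule.sub_mem _ huW (hsmulW _ _ hrW))
    · apply Subtype.ext
      change c • v + a • (fun i => aeval a (g i - C c * r i).divX) = u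
      rw [hdiv, smul_inv_smul₀ ha]
      abel

/-! ### Partition of the nonzero vectors by points -/

/-- The nonzero vectors of `V ≤ U` are partitioned by the points of `L_U`. -/
lemma card_eq_sum_linearSet [Finite F] [Finite E] {U V : Submodule F (Fin n → E)} (hVU : V ≤ U)
    (hfin : (linearSet U).Finite) :
    (Nat.card V : ℤ) - 1 =
      ∑ W ∈ hfin.toFinset, ((Nat.card {u // u ∈ V ∧ u ∈ W} : ℤ) - 1) := by
  classical
  have := Fintype.ofFinite E
  have hcount : ∀ P : (Fin n → E) → Prop, P 0 →
      ((Finset.univ.filter fun u => P u ∧ u ≠ 0).card : ℤ) = (Nat.card {u // P u} : ℤ) - 1 := by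
    intro P hP
    rw [Nat.card_eq_fintype_card, Fintype.card_subtype]
    have : Finset.univ.filter (fun u => P u ∧ u ≠ 0) = (Finset.univ.filter P).erase 0 := by
      ext u
      simp [and_comm]
    rw [this, Finset.card_erase_of_mem (by simpa using hP)]
    have : 1 ≤ (Finset.univ.filter P).card := Finset.card_pos.2 ⟨0, by simpa using hP⟩
    rw [Nat.cast_sub this, Nat.cast_one]
  have hmaps : Set.MapsTo (fun u : Fin n → E => Submodule.span E {u})
      ((Finset.univ.filter fun u => u ∈ V ∧ u ≠ 0 : Finset (Fin n → E)) : Set (Fin n → E))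
      (hfin.toFinset : Set (Submodule E (Fin n → E))) := by
    intro u hu
    simp only [Finset.coe_filter, Finset.mem_univ, true_and, Set.mem_ofPred_eq] at hu
    simp only [Set.Finite.coe_toFinset]
    exact ⟨u, hVU hu.1, hu.2, rfl⟩
  have hcV := hcount (fun u => u ∈ V) V.zero_mem
  rw [show Nat.card V = Nat.card {u // u ∈ V} from rfl, ← hcV,
    Finset.card_eq_sum_card_fiberwise hmaps, Nat.cast_sum]
  refine Finset.sum_congr rfl fun W hW => ?_
  rw [← hcount (fun u => u ∈ V ∧ u ∈ W) ⟨V.zero_mem, W.zero_mem⟩, Finset.filter_filter]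
  congr 2
  ext u
  simp only [Finset.mem_filter, Finset.mem_univ, true_and]
  obtain ⟨w, -, hw0, rfl⟩ := (Set.Finite.mem_toFinset hfin).1 hW
  constructor
  · rintro ⟨⟨hu, hu0⟩, hs⟩
    exact ⟨⟨hu, hs ▸ Submodule.mem_span_singleton_self u⟩, hu0⟩
  · rintro ⟨⟨hu, hs⟩, hu0⟩
    refine ⟨⟨hu, hu0⟩, ?_⟩
    obtain ⟨c, rfl⟩ := Submodule.mem_span_singleton.1 hs
    have hc : c ≠ 0 := by
      rintro rfl
      simp at hu0
    exact Submodule.span_singleton_smul_eq (IsUnit.mk0 c hc) w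

end

/-! ### Choice of the exponents and of the generator -/

lemma exists_le_sum_eq {n : ℕ} (M : Fin n → ℕ) (k : ℕ) (hk : k ≤ ∑ i, M i) :
    ∃ s : Fin n → ℕ, (∀ i, s i ≤ M i) ∧ ∑ i, s i = k := by
  induction n generalizing k with
  | zero => exact ⟨M, fun i => le_rfl, by simp at hk ⊢; omega⟩
  | succ n ih =>
    rw [Fin.sum_univ_succ] at hk
    obtain ⟨s, hs, hsum⟩ := ih (fun i => M i.succ) (k - min k (M 0)) (by omega)
    refine ⟨Fin.cons (min k (M 0)) s, fun i => ?_, ?_⟩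
    · refine Fin.cases ?_ (fun i => ?_) i
      · simp
      · simpa using hs i
    · rw [Fin.sum_univ_succ]
      simp only [Fin.cons_zero, Fin.cons_succ, hsum]
      omega

/-- Exponents for the construction. For odd `h` all `t i` are at most `(h + 1) / 2`; for even `h`
they are at most `h / 2`, except `t 0`, which may be `h / 2 + 1`. -/
lemma exists_exponents {h l k : ℕ} (hh : 0 < h) (hlow : l + 1 ≤ k)
    (hodd : Odd h → 2 * k ≤ (l + 1) * (h + 1))
    (heven : Even h → 2 * k ≤ 2 + (l + 1) * h) :
    ∃ t : Fin (l + 1) → ℕ, (∀ i, 1 ≤ t i) ∧ (∀ i, t i ≤ h) ∧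
      (∀ i j, i ≠ j → t i + t j ≤ h + 1) ∧ ∑ i, t i = k := by
  have main : ∀ m e : ℕ, k ≤ (l + 1) * (m + 1) + e → m + e + 1 ≤ h → 2 * m + e + 1 ≤ h →
      ∃ t : Fin (l + 1) → ℕ, (∀ i, 1 ≤ t i) ∧ (∀ i, t i ≤ h) ∧
      (∀ i j, i ≠ j → t i + t j ≤ h + 1) ∧ ∑ i, t i = k := by
    intro m e hk h1 h2
    obtain ⟨s, hs, hsum⟩ := exists_le_sum_eq
      (Fin.cons (m + e) fun _ => m : Fin (l + 1) → ℕ) (k - (l + 1)) (by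
        rw [Fin.sum_univ_succ]
        simp only [Fin.cons_zero, Fin.cons_succ, Finset.sum_const, Finset.card_univ,
          Fintype.card_fin, smul_eq_mul]
        have : (l + 1) * (m + 1) = l * m + m + (l + 1) := by ring
        omega)
    have hs0 : s 0 ≤ m + e := hs 0
    have hsS : ∀ i : Fin l, s i.succ ≤ m := fun i => hs i.succ
    refine ⟨fun i => s i + 1, fun i => Nat.le_add_left 1 (s i), ?_, ?_, ?_⟩
    · intro i
      refine Fin.cases ?_ (fun i => ?_) i
      · grind
      · have := hsS i
        grind
    · intro i j
      refine Fin.cases ?_ (fun i => ?_) i <;> refine Fin.cases ?_ (fun j => ?_) j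
      · exact fun hne => absurd rfl hne
      · have := hsS j
        intro _
        grind
      · have := hsS i
        intro _
        grind
      · have := hsS i
        have := hsS j
        intro _
        grind
    · rw [Finset.sum_add_distrib, hsum]
      simp
      omega
  rcases Nat.even_or_odd h with he | ho
  · obtain ⟨m, rfl⟩ : ∃ m, h = 2 * (m + 1) := by
      obtain ⟨m, rfl⟩ := he
      exact ⟨m - 1, by omega⟩
    refine main m 1 ?_ (by omega) (by omega)
    have := heven he
    nlinarith
  · obtain ⟨m, rfl⟩ := id ho
    refine main m 0 ?_ (by omega) (by omega)
    have := hodd ho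
    nlinarith

/-- A finite extension of finite fields has a nonzero generator, which is not a root of any nonzero
polynomial of degree less than that of the extension. -/
lemma exists_generator (F E : Type*) [Field F] [Field E] [Finite E] [Algebra F E]
    [FiniteDimensional F E] :
    ∃ a : E, a ≠ 0 ∧
      ∀ p : F[X], p.degree < (Module.finrank F E : ℕ) → aeval a p = 0 → p = 0 := by
  obtain ⟨a, ha0, ha⟩ : ∃ a : E, a ≠ 0 ∧ IntermediateField.adjoin F {a} = ⊤ := by
    obtain ⟨a, ha⟩ := Field.exists_primitive_element_of_finite_top F E
    rcases eq_or_ne a 0 with rfl | h0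
    · -- If `0` generates `E`, then `E = F` and `1` generates as well.
      refine ⟨1, one_ne_zero, ?_⟩
      rw [← ha, IntermediateField.adjoin_zero, IntermediateField.adjoin_one]
    · exact ⟨a, h0, ha⟩
  refine ⟨a, ha0, fun p hp hroot => ?_⟩
  by_contra hne
  have h1 := minpoly.degree_le_of_ne_zero F a hne hroot
  have hint : IsIntegral F a := IsIntegral.of_finite F a
  rw [degree_eq_natDegree (minpoly.ne_zero hint),
    (Field.primitive_element_iff_minpoly_natDegree_eq F a).1 ha] at h1
  exact absurd hp (not_lt.2 h1)

/-- Corollary 2.15 of the paper. For all `k` with `l + 1 ≤ k` and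
`k ≤ (l+1)(h+1)/2` if `h` is odd (resp. `k ≤ 1 + (l+1)h/2` if `h` is even), there is a
rank-`k` `F_q`-linear set in `PG(l, q^h)` of size `q^(k-1) + q^(k-2) + … + q^(k-l) + 1`. -/
theorem stmt10 (q h l k : ℕ) (F E : Type*) [Field F] [Fintype F] [Field E] [Fintype E]
    [Algebra F E] (hq : Fintype.card F = q) (hE : Fintype.card E = q ^ h)
    (hh : Module.finrank F E = h) (hl : 1 ≤ l) (hlow : l + 1 ≤ k)
    (hodd : Odd h → 2 * k ≤ (l + 1) * (h + 1))
    (heven : Even h → 2 * k ≤ 2 + (l + 1) * h) :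
    ∃ U : Submodule F (Fin (l + 1) → E), Module.finrank F U = k ∧
      (linearSet U).ncard = (∑ i ∈ Finset.range l, q ^ (k - 1 - i)) + 1 := by
  classical
  have hfd : FiniteDimensional F E := Module.Finite.of_finite
  have hpos : 0 < h := hh ▸ Module.finrank_pos
  obtain ⟨t, ht1, ht, ht2, hsum⟩ := exists_exponents hpos hlow hodd heven
  obtain ⟨a, ha, hroot⟩ := exists_generator F E
  rw [hh] at hroot
  have hrank := finrank_polyBox hroot ht
  have hrank' := finrank_polyBox (t := fun i => t i - 1) hroot
    (fun i => (Nat.sub_le _ _).trans (ht i))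
  have hsum' : ∑ i, (t i - 1) = k - (l + 1) := by
    have h1 : ∑ i, t i = ∑ i, (t i - 1) + (l + 1) := by
      rw [show ∑ i, (t i - 1) + (l + 1) = ∑ i, (t i - 1) + ∑ _i : Fin (l + 1), 1 by simp,
        ← Finset.sum_add_distrib]
      exact Finset.sum_congr rfl fun i _ => (Nat.sub_add_cancel (ht1 i)).symm
    omega
  rw [hsum] at hrank
  rw [hsum'] at hrank'
  refine ⟨polyBox a t, hrank, ?_⟩
  have hfin : (linearSet (polyBox (F := F) a t)).Finite := Set.toFinite _
  have hcardF : Nat.card F = q := by rw [Nat.card_eq_fintype_card, hq]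
  have hcard : Nat.card (polyBox (F := F) a t) = q ^ k := by
    rw [Module.natCard_eq_pow_finrank (K := F), hcardF, hrank]
  have hcard' : Nat.card (polyBox (F := F) a fun i => t i - 1) = q ^ (k - (l + 1)) := by
    rw [Module.natCard_eq_pow_finrank (K := F), hcardF, hrank']
  have h1 := card_eq_sum_linearSet (le_refl (polyBox (F := F) a t)) hfin
  have h2 := card_eq_sum_linearSet
    (polyBox_mono (F := F) (a := a) fun i => Nat.sub_le (t i) 1) hfin
  rw [hcard] at h1
  rw [hcard'] at h2
  have hq2 : 2 ≤ q := hq ▸ Fintype.one_lt_card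
  have h3 : (q : ℤ) ^ k - 1 - q * (q ^ (k - (l + 1)) - 1) =
      (linearSet (polyBox (F := F) a t)).ncard * (q - 1) := by
    push_cast at h1 h2
    rw [h1, h2, Finset.mul_sum, ← Finset.sum_sub_distrib, Set.ncard_eq_toFinset_card _ hfin,
      ← nsmul_eq_mul]
    refine Finset.sum_eq_card_nsmul fun W hW => ?_
    rw [card_inf_polyBox ha hroot ht1 ht ht2 ((Set.Finite.mem_toFinset hfin).1 hW), hcardF]
    push_cast
    ring
  have hgeom : ∀ m : ℕ, m + 1 ≤ k →
      ((q : ℤ) - 1) * ∑ i ∈ Finset.range m, (q : ℤ) ^ (k - 1 - i) = q ^ k - q ^ (k - m) := by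
    intro m
    induction m with
    | zero => simp
    | succ m ih =>
      intro hm
      rw [Finset.sum_range_succ, mul_add, ih (by omega), show k - m = k - 1 - m + 1 by omega,
        show k - (m + 1) = k - 1 - m by omega]
      ring
  have h4 := hgeom l hlow
  rw [show k - l = k - (l + 1) + 1 by omega] at h4
  have hq1 : (q : ℤ) - 1 ≠ 0 := by
    have : (2 : ℤ) ≤ q := by exact_mod_cast hq2
    omega
  have h5 : ((linearSet (polyBox (F := F) a t)).ncard : ℤ) =
      ∑ i ∈ Finset.range l, (q : ℤ) ^ (k - 1 - i) + 1 := by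
    apply mul_right_cancel₀ hq1
    rw [← h3]
    linear_combination -h4
  exact_mod_cast h5
end
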